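/- arXiv:2403.15086 — 4 statements merged into one kernel-verified Lean document; each statement's English description precedes it below -/
import Mathlib

section
/- For every integer $p \geq 0$ and real parameter $t$, the interpolated multiple zeta value satisfies $\zeta^t(\{1\}^p, 2) = (1 + t + t^2 + \cdots + t^p)\,\zeta(p+2)$. -/
open scoped BigOperators
open MeasureTheory

/-- Multiple zeta value for an index given as a list. -/
noncomputable def mzvL (k : List ℕ) : ℝ :=
  ∑' m : {f : Fin k.length → ℕ+ // StrictMono f},
    ∏ i, (1 : ℝ) / (((m.1 i : ℕ+) : ℕ) : ℝ) ^ (k.get i)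

/-- Multiple zeta-star value for an index given as a list. -/
noncomputable def zetaStarL (k : List ℕ) : ℝ :=
  ∑' m : {f : Fin k.length → ℕ+ // Monotone f},
    ∏ i, (1 : ℝ) / (((m.1 i : ℕ+) : ℕ) : ℝ) ^ (k.get i)

/-- Riemann zeta at a natural number argument. -/
noncomputable def rz (s : ℕ) : ℝ := ∑' n : ℕ+, (1 : ℝ) / ((n : ℕ) : ℝ) ^ s

/-- Multiple polylogarithm (single variable). -/
noncomputable def LiL (k : List ℕ) (z : ℝ) : ℝ :=
  ∑' m : {f : Fin k.length → ℕ+ // StrictMono f},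
    z ^ (if h : 0 < k.length then ((m.1 ⟨k.length - 1, Nat.sub_lt h Nat.one_pos⟩ : ℕ+) : ℕ) else 0)
      / ∏ i, (((m.1 i : ℕ+) : ℕ) : ℝ) ^ (k.get i)

/-- Arakawa-Kaneko multiple zeta function. -/
noncomputable def xiL (k : List ℕ) (s : ℝ) : ℝ :=
  (1 / Real.Gamma s) *
    ∫ t in Set.Ioi (0 : ℝ), t ^ (s - 1) / (Real.exp t - 1) * LiL k (1 - Real.exp (-t))

/-- All indices obtained from `k` by filling each box with a comma or a plus. -/
def fills : List ℕ → List (List ℕ)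
  | [] => [[]]
  | [a] => [[a]]
  | a :: b :: rest => ((fills (b :: rest)).map (a :: ·)) ++ fills ((a + b) :: rest)
termination_by l => l.length

/-- Interpolated multiple zeta value (t-MZV). -/
noncomputable def zetaT (t : ℝ) (k : List ℕ) : ℝ :=
  ((fills k).map (fun k' => t ^ (k.length - k'.length) * mzvL k')).sum

/-- t-Arakawa-Kaneko multiple zeta value. -/
noncomputable def xiT (t : ℝ) (k : List ℕ) (s : ℝ) : ℝ :=
  ((fills k).map (fun k' => t ^ (k.length - k'.length) * xiL k' s)).sum

/-!
The coefficient of `t ^ e` in `ζ^t({1}^p, 2)` is the sum of `ζ(k)` over all admissible indices `k`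
of weight `p + 2` and depth `p + 1 - e`, so the theorem says that each of these sums equals
`ζ(p + 2)`, which is the sum formula for multiple zeta values.

For the sum formula, fix the depth and form the generating function in the excess of the weight,
with variable `y = 1 - z`. Geometric series replace the factors `n^{-k}` by `1 / (n - 1 + z)`. The
connector `C(a, m) = (z)_a (z)_m / (z)_{a+m}` satisfies the transport relation
`C(a, m) - C(a+1, m) = m / (a + z) * C(a+1, m)`. Summed over `a`, it telescopes and trades a
summation over `n > a` on the index side for a factor `1 / m` on the other, until
`∑ m ^ {-s-1} / (m - 1 + z)` is reached, whose coefficients are zeta values. All terms are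
nonnegative for `0 < y < 1` and `t ≥ 0`; negative `t` follow because both sides are polynomials
in `t`.
-/

open scoped ENNReal NNReal
open Filter Finset Topology

/-! ### Series -/

theorem hasSum_of_add_succ_eq {f g : ℕ → ℝ≥0} (h : ∀ k, g k + f (k + 1) = f k)
    (hf : Tendsto f atTop (𝓝 0)) : HasSum g (f 0) := by
  have partial_sum (K : ℕ) : ∑ k ∈ range K, g k + f K = f 0 := by
    induction K with
    | zero => simp
    | succ K ih => rw [sum_range_succ, add_assoc, h, ih]
  rw [NNReal.hasSum_iff_tendsto_nat]
  simpa [← eq_tsub_of_add_eq (partial_sum _)] using tendsto_const_nhds (x := f 0).sub hf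

theorem ennreal_tsum_mul_tsum_eq_tsum_sum_antidiagonal (f g : ℕ → ℝ≥0∞) :
    (∑' i, f i) * ∑' j, g j = ∑' n, ∑ ij ∈ antidiagonal n, f ij.1 * g ij.2 := by
  simp_rw [← ENNReal.tsum_mul_right, ← ENNReal.tsum_mul_left,
    ← ENNReal.tsum_prod (f := fun i j => f i * g j),
    ← (HasAntidiagonal.sigmaAntidiagonalEquivProd (A := ℕ)).tsum_eq, ENNReal.tsum_sigma',
    ← Finset.tsum_subtype]
  rfl

theorem eq_of_forall_hasSum_pow_mul {a b : ℕ → ℝ} {f : ℝ → ℝ} {r : ℝ} (hr : 0 < r)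
    (ha : ∀ y ∈ Set.Ioo 0 r, HasSum (fun n => y ^ n * a n) (f y))
    (hb : ∀ y ∈ Set.Ioo 0 r, HasSum (fun n => y ^ n * b n) (f y)) : a = b := by
  set p := FormalMultilinearSeries.ofScalars ℝ (a - b) with hp
  have hasSum_zero : ∀ y ∈ Set.Ioo 0 r, HasSum (fun n => y ^ n * (a - b) n) 0 := fun y hy => by
    simpa [mul_sub] using (ha y hy).sub (hb y hy)
  have radius_pos : 0 < p.radius := by
    refine (ENNReal.coe_pos.mpr (show 0 < (r / 2).toNNReal by simpa)).trans_le
      (p.le_radius_of_tendsto (l := 0) ?_)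
    have terms_tendsto :=
      (hasSum_zero (r / 2) ⟨by positivity, by linarith⟩).summable.tendsto_atTop_zero.norm
    simpa [hp, mul_comm, abs_of_pos hr, max_eq_left (half_pos hr).le] using terms_tendsto
  have analytic := (p.hasFPowerSeriesOnBall radius_pos).hasFPowerSeriesAt
  have sum_eq_zero : ∀ y ∈ Set.Ioo 0 r, p.sum y = 0 := fun y hy => by
    simpa [hp, FormalMultilinearSeries.sum, mul_comm] using (hasSum_zero y hy).tsum_eq
  have frequently_zero : ∃ᶠ y in 𝓝[≠] 0, p.sum y = 0 :=
    (eventually_of_mem (Ioo_mem_nhdsGT hr) sum_eq_zero).frequently.filter_mono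
      (nhdsWithin_mono _ fun _ hy => ne_of_gt hy)
  have p_eq_zero := analytic.eq_zero_of_eventually
    (analytic.analyticAt.frequently_zero_iff_eventually_zero.mp frequently_zero)
  exact sub_eq_zero.mp ((FormalMultilinearSeries.ofScalars_series_eq_zero ℝ).mp p_eq_zero)

theorem eq_of_forall_tsum_pow_mul_eq {a b : ℕ → ℝ≥0∞} {r : ℝ≥0} (hr : 0 < r)
    (hb : ∀ y < r, ∑' n, (y : ℝ≥0∞) ^ n * b n ≠ ∞)
    (h : ∀ y < r, ∑' n, (y : ℝ≥0∞) ^ n * a n = ∑' n, (y : ℝ≥0∞) ^ n * b n) : a = b := by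
  have hasSum_toReal {c : ℕ → ℝ≥0∞} (hc : ∀ y < r, ∑' n, (y : ℝ≥0∞) ^ n * c n ≠ ∞) :
      ∀ y ∈ Set.Ioo 0 (r : ℝ), HasSum (fun n => y ^ n * (c n).toReal)
        (∑' n, (y.toNNReal : ℝ≥0∞) ^ n * c n).toReal := fun y hy => by
    have hsum := hc y.toNNReal ((Real.toNNReal_lt_iff_lt_coe hy.1.le).mpr hy.2)
    have := ENNReal.hasSum_toReal hsum
    rw [ENNReal.tsum_toReal_eq (ENNReal.ne_top_of_tsum_ne_top hsum)]
    simpa [hy.1.le] using this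
  have ne_top {c : ℕ → ℝ≥0∞} (hc : ∀ y < r, ∑' n, (y : ℝ≥0∞) ^ n * c n ≠ ∞) (n : ℕ) :
      c n ≠ ∞ := fun hn => by
    have hy := ENNReal.ne_top_of_tsum_ne_top (hc (r / 2) (half_lt_self hr)) n
    have : ((r / 2 : ℝ≥0) : ℝ≥0∞) ^ n ≠ 0 := by positivity
    exact hy (by rw [hn, ENNReal.mul_top this])
  have ha : ∀ y < r, ∑' n, (y : ℝ≥0∞) ^ n * a n ≠ ∞ := fun y hy => h y hy ▸ hb y hy
  have toReal_eq := eq_of_forall_hasSum_pow_mul (NNReal.coe_pos.mpr hr) (hasSum_toReal ha)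
    (f := fun y => (∑' n, (y.toNNReal : ℝ≥0∞) ^ n * a n).toReal) fun y hy => by
      rw [h _ ((Real.toNNReal_lt_iff_lt_coe hy.1.le).mpr hy.2)]
      exact hasSum_toReal hb y hy
  funext n
  exact (ENNReal.toReal_eq_toReal_iff' (ne_top ha n) (ne_top hb n)).mp (congrFun toReal_eq n)

theorem tsum_pnat_ite_lt {M : Type*} [AddCommMonoid M] [TopologicalSpace M] (f : ℕ → M) (a : ℕ) :
    ∑' n : ℕ+, (if a < (n : ℕ) then f n else 0) = ∑' j : ℕ, f (a + j + 1) := by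
  have inj : Function.Injective fun j => Nat.succPNat (a + j) := fun i j hij => by simpa using hij
  rw [← inj.tsum_eq]
  · simp [Nat.succPNat_coe]
  · intro n hn
    have hlt : a < n := by by_contra hle; simp [hle] at hn
    exact ⟨n - a - 1, PNat.eq (by simp; omega)⟩

theorem list_sum_tsum {α β : Type*} (l : List α) (f : α → β → ℝ≥0∞) :
    (l.map fun x => ∑' n, f x n).sum = ∑' n, (l.map fun x => f x n).sum := by
  induction l with
  | nil => simp
  | cons x l ih => simp [ih, ENNReal.tsum_add]

theorem toReal_list_sum {l : List ℝ≥0∞} (h : ∀ x ∈ l, x ≠ ∞) :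
    l.sum.toReal = (l.map ENNReal.toReal).sum := by
  induction l with
  | nil => simp
  | cons x l ih =>
    rw [List.forall_mem_cons] at h
    have sum_ne_top : l.sum ≠ ∞ :=
      List.sum_induction (· ≠ ∞) (fun _ _ hx hy => ENNReal.add_ne_top.mpr ⟨hx, hy⟩)
        ENNReal.zero_ne_top h.2
    rw [List.sum_cons, ENNReal.toReal_add h.1 sum_ne_top, ih h.2, List.map_cons, List.sum_cons]

/-! ### Zeta values -/

/-- The zeta value `ζ(s)` as a sum in `ℝ≥0∞`, so that rearrangements need no summability proofs;
it is `∞` for `s ≤ 1`. -/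
noncomputable def zetaENN (s : ℕ) : ℝ≥0∞ := ∑' m : ℕ, ((m + 1 : ℕ) : ℝ≥0∞)⁻¹ ^ s

theorem zetaENN_add_le (s l : ℕ) : zetaENN (s + l) ≤ zetaENN s :=
  ENNReal.tsum_le_tsum fun m => pow_le_pow_right_of_le_one' (by simp) (Nat.le_add_right s l)

theorem zetaENN_ne_top {s : ℕ} (hs : 1 < s) : zetaENN s ≠ ∞ := by
  have summable : Summable fun m : ℕ => (((m + 1 : ℕ) : ℝ≥0) ^ s)⁻¹ :=
    (NNReal.summable_nat_add_iff (f := fun n : ℕ => ((n : ℝ≥0) ^ s)⁻¹) 1).mpr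
      (NNReal.summable_coe.mp (by simpa using hs))
  have coe_eq (m : ℕ) : ((m + 1 : ℕ) : ℝ≥0∞)⁻¹ ^ s = ((((m + 1 : ℕ) : ℝ≥0) ^ s)⁻¹ : ℝ≥0) := by
    rw [ENNReal.coe_inv (by positivity), ENNReal.coe_pow, ENNReal.coe_natCast, ENNReal.inv_pow]
  simp_rw [zetaENN, coe_eq]
  exact ENNReal.tsum_coe_ne_top_iff_summable.mpr summable

theorem toReal_zetaENN (s : ℕ) : (zetaENN s).toReal = rz s := by
  rw [rz, zetaENN, tsum_pnat_eq_tsum_succ (f := fun n : ℕ => (1 : ℝ) / (n : ℝ) ^ s),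
    ENNReal.tsum_toReal_eq fun m => by simp]
  simp only [ENNReal.toReal_pow, ENNReal.toReal_inv, ENNReal.toReal_natCast, one_div, inv_pow]

/-! ### Connected sums -/

/-- The connector `C(a, m) = (z)_a (z)_m / (z)_{a+m}` of rising factorials, which links the
summation variables of the two sides of the sum formula. -/
noncomputable def connector (z : ℝ≥0) (a m : ℕ) : ℝ≥0 :=
  (ascPochhammer ℝ≥0 a).eval z * (ascPochhammer ℝ≥0 m).eval z /
    (ascPochhammer ℝ≥0 (a + m)).eval z

/-- The connected sum `∑_{m ≥ 1} C(a, m) / (m ^ s * (m - 1 + z))`, which interpolates between the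
two sides of the sum formula; the summation variable is shifted to `m + 1`. -/
noncomputable def connectedSum (z : ℝ≥0) (s a : ℕ) : ℝ≥0∞ :=
  ∑' m : ℕ, connector z a (m + 1) * (((m + 1 : ℕ) : ℝ≥0∞)⁻¹ ^ s * (m + z : ℝ≥0∞)⁻¹)

section ConnectedSum

variable {z : ℝ≥0}

theorem connector_comm (z : ℝ≥0) (a m : ℕ) : connector z a m = connector z m a := by
  rw [connector, connector, mul_comm (Polynomial.eval z _), add_comm a]

theorem connector_zero_left (hz : 0 < z) (m : ℕ) : connector z 0 m = 1 := by
  simp [connector, (ascPochhammer_pos m z hz).ne']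

theorem connector_succ_left (hz : 0 < z) (a m : ℕ) :
    connector z (a + 1) m * (a + m + z) = connector z a m * (a + z) := by
  have eval_ne_zero := (ascPochhammer_pos (a + m) z hz).ne'
  rw [connector, connector, add_right_comm a 1, ascPochhammer_succ_eval, ascPochhammer_succ_eval]
  push_cast
  field_simp
  ring

theorem connector_succ_right_le (hz : 0 < z) (a m : ℕ) :
    connector z a (m + 1) ≤ connector z a m := by
  rw [connector_comm z a, connector_comm z a]
  refine le_of_mul_le_mul_right ?_ (show 0 < (m + a + z : ℝ≥0) by positivity)
  rw [connector_succ_left hz]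
  gcongr
  simp

theorem connector_succ_right_le_div (hz : 0 < z) (a m : ℕ) :
    connector z a (m + 1) ≤ z / (a + z) := by
  induction m with
  | zero =>
    have h := connector_succ_left hz 0 a
    rw [connector_zero_left hz] at h
    rw [connector_comm, le_div_iff₀ (by positivity)]
    simpa using h.le
  | succ m ih => exact (connector_succ_right_le hz a (m + 1)).trans ih

theorem tendsto_connector_atTop (hz : 0 < z) (a m : ℕ) :
    Tendsto (fun k => connector z (a + k) (m + 1)) atTop (𝓝 0) := by
  refine tendsto_of_tendsto_of_tendsto_of_le_of_le' tendsto_const_nhds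
    (tendsto_const_div_atTop_nhds_zero_nat z) (.of_forall fun _ => zero_le) ?_
  filter_upwards [eventually_gt_atTop 0] with k hk
  refine (connector_succ_right_le_div hz _ m).trans ?_
  push_cast
  gcongr
  exact le_add_right (le_add_left le_rfl)

theorem connector_transport (hz : 0 < z) (a m : ℕ) :
    (m / (a + z)) * connector z (a + 1) m + connector z (a + 1) m = connector z a m := by
  have : (a + z : ℝ≥0) ≠ 0 := by positivity
  field_simp
  linear_combination connector_succ_left hz a m

theorem tsum_inv_mul_connector (hz : 0 < z) (a m : ℕ) :
    ∑' k : ℕ, (((a + k : ℕ) + z : ℝ≥0∞)⁻¹ * connector z (a + k + 1) (m + 1)) =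
      connector z a (m + 1) * ((m + 1 : ℕ) : ℝ≥0∞)⁻¹ := by
  have telescope : HasSum (fun k : ℕ => (m + 1 : ℕ) / ((a + k : ℕ) + z) *
      connector z (a + k + 1) (m + 1)) (connector z a (m + 1)) :=
    hasSum_of_add_succ_eq (fun k => connector_transport hz (a + k) (m + 1))
      (tendsto_connector_atTop hz a m)
  rw [← (ENNReal.hasSum_coe.mpr telescope).tsum_eq, ← ENNReal.tsum_mul_right]
  refine tsum_congr fun k => ?_
  have hk : ((a + k : ℕ) + z : ℝ≥0) ≠ 0 := by positivity
  have hm : ((m + 1 : ℕ) : ℝ≥0) ≠ 0 := by positivity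
  have cancel : ((a + k : ℕ) + z : ℝ≥0)⁻¹ * connector z (a + k + 1) (m + 1) =
      (m + 1 : ℕ) / ((a + k : ℕ) + z) * connector z (a + k + 1) (m + 1) *
        ((m + 1 : ℕ) : ℝ≥0)⁻¹ := by
    field_simp
  rw [← ENNReal.coe_natCast (a + k), ← ENNReal.coe_natCast (m + 1), ← ENNReal.coe_add,
    ← ENNReal.coe_inv hk, ← ENNReal.coe_inv hm, ← ENNReal.coe_mul, ← ENNReal.coe_mul, cancel]

theorem connectedSum_zero_left (hz : 0 < z) (s : ℕ) :
    connectedSum z s 0 = ∑' m : ℕ, ((m + 1 : ℕ) : ℝ≥0∞)⁻¹ ^ s * (m + z : ℝ≥0∞)⁻¹ := by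
  simp [connectedSum, connector_zero_left hz]

theorem connectedSum_zero_succ (hz : 0 < z) (n : ℕ) :
    connectedSum z 0 (n + 1) = ((n + 1 : ℕ) : ℝ≥0∞)⁻¹ := by
  simpa [connectedSum, connector_zero_left hz, connector_comm z (n + 1), mul_comm]
    using tsum_inv_mul_connector hz 0 n

theorem tsum_inv_mul_connectedSum (hz : 0 < z) (s a : ℕ) :
    ∑' k : ℕ, ((a + k : ℕ) + z : ℝ≥0∞)⁻¹ * connectedSum z s (a + k + 1) =
      connectedSum z (s + 1) a := by
  simp_rw [connectedSum, ← ENNReal.tsum_mul_left, ← mul_assoc]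
  rw [ENNReal.tsum_comm]
  simp_rw [ENNReal.tsum_mul_right, tsum_inv_mul_connector hz, pow_succ', mul_assoc]

end ConnectedSum

/-! ### The sum formula -/

/-- The sum of `n₁^{-k₁} ⋯ n_r^{-k_r}` over the admissible indices `(k₁, …, k_r)` of depth
`r = s + 1` and weight `s + e + 2` and over `n = n₁ < n₂ < ⋯ < n_r`: the contribution of smallest
summation variable `n` to the sum of the corresponding multiple zeta values. Here `e` is the excess
of the weight over its minimum `s + 2`, and the summand `ij.1` is `k₁ - 1`. -/
noncomputable def admissibleHead : ℕ → ℕ → ℕ → ℝ≥0∞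
  | 0, e, n => (n : ℝ≥0∞)⁻¹ ^ (e + 2)
  | s + 1, e, n => ∑ ij ∈ antidiagonal e,
      (n : ℝ≥0∞)⁻¹ ^ (ij.1 + 1) * ∑' k : ℕ, admissibleHead s ij.2 (n + k + 1)

/-- The sum of `n₁^{-k₁} ⋯ n_r^{-k_r}` over the admissible indices of depth `s + 1` and weight
`s + e + 2` and over `a < n₁ < ⋯ < n_r`; for `a = 0` it is the left side of the sum formula. -/
noncomputable def admissibleTail (s e a : ℕ) : ℝ≥0∞ := ∑' k : ℕ, admissibleHead s e (a + k + 1)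

theorem admissibleHead_succ (s e n : ℕ) : admissibleHead (s + 1) e n =
    ∑ ij ∈ antidiagonal e, (n : ℝ≥0∞)⁻¹ ^ (ij.1 + 1) * admissibleTail s ij.2 n := by
  rw [admissibleHead]; rfl

theorem admissibleHead_zero_succ (e n : ℕ) :
    admissibleHead 0 (e + 1) n = (n : ℝ≥0∞)⁻¹ * admissibleHead 0 e n := by
  rw [admissibleHead, admissibleHead, ← pow_succ']

theorem admissibleHead_succ_zero (s n : ℕ) :
    admissibleHead (s + 1) 0 n = (n : ℝ≥0∞)⁻¹ * admissibleTail s 0 n := by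
  simp [admissibleHead_succ]

theorem admissibleHead_succ_succ (s e n : ℕ) :
    admissibleHead (s + 1) (e + 1) n =
      (n : ℝ≥0∞)⁻¹ * (admissibleTail s (e + 1) n + admissibleHead (s + 1) e n) := by
  rw [admissibleHead_succ, Finset.Nat.sum_antidiagonal_succ, admissibleHead_succ, mul_add, mul_sum]
  simp only [zero_add, pow_succ', pow_zero, mul_one, mul_assoc]

section GeneratingFunction

variable {y z : ℝ≥0}

theorem tsum_pow_mul_inv_pow_succ (hyz : y + z = 1) (n : ℕ) :
    ∑' e : ℕ, (y : ℝ≥0∞) ^ e * ((n + 1 : ℕ) : ℝ≥0∞)⁻¹ ^ (e + 1) = (n + z : ℝ≥0∞)⁻¹ := by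
  simp_rw [pow_succ, ← mul_assoc, ← mul_pow]
  rw [ENNReal.tsum_mul_right, ENNReal.tsum_geometric]
  have h : (1 - y * ((n + 1 : ℕ) : ℝ≥0∞)⁻¹) * (n + 1 : ℕ) = n + z := by
    rw [ENNReal.sub_mul (by simp), one_mul, mul_assoc,
      ENNReal.inv_mul_cancel (by simp) (by simp), mul_one]
    refine ENNReal.sub_eq_of_eq_add (by simp) ?_
    rw [add_assoc, ← ENNReal.coe_add, add_comm z, hyz]
    simp
  rw [← h, ENNReal.mul_inv (by simp) (by simp)]

theorem tsum_pow_mul_admissibleHead_zero (hyz : y + z = 1) (n : ℕ) :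
    ∑' e, (y : ℝ≥0∞) ^ e * admissibleHead 0 e (n + 1) =
      (n + z : ℝ≥0∞)⁻¹ * ((n + 1 : ℕ) : ℝ≥0∞)⁻¹ := by
  simp_rw [admissibleHead, pow_succ _ (_ + 1), ← mul_assoc]
  rw [ENNReal.tsum_mul_right, tsum_pow_mul_inv_pow_succ hyz]

theorem tsum_pow_mul_admissibleHead_succ (hyz : y + z = 1) (s n : ℕ) :
    ∑' e, (y : ℝ≥0∞) ^ e * admissibleHead (s + 1) e (n + 1) =
      (n + z : ℝ≥0∞)⁻¹ * ∑' e, (y : ℝ≥0∞) ^ e * admissibleTail s e (n + 1) := by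
  rw [← tsum_pow_mul_inv_pow_succ hyz, ennreal_tsum_mul_tsum_eq_tsum_sum_antidiagonal]
  refine tsum_congr fun e => ?_
  rw [admissibleHead_succ, mul_sum]
  refine sum_congr rfl fun ij hij => ?_
  rw [← mem_antidiagonal.mp hij, pow_add]
  ring

theorem tsum_pow_mul_admissibleTail_eq_tsum_tsum (s a : ℕ) :
    ∑' e, (y : ℝ≥0∞) ^ e * admissibleTail s e a =
      ∑' k : ℕ, ∑' e, (y : ℝ≥0∞) ^ e * admissibleHead s e (a + k + 1) := by
  simp_rw [admissibleTail, ← ENNReal.tsum_mul_left]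
  exact ENNReal.tsum_comm

theorem tsum_pow_mul_admissibleTail_eq_connectedSum (hyz : y + z = 1) (hz : 0 < z) (s a : ℕ) :
    ∑' e, (y : ℝ≥0∞) ^ e * admissibleTail s e a = connectedSum z (s + 1) a := by
  induction s generalizing a with
  | zero =>
    simp_rw [tsum_pow_mul_admissibleTail_eq_tsum_tsum, tsum_pow_mul_admissibleHead_zero hyz,
      ← connectedSum_zero_succ hz, tsum_inv_mul_connectedSum hz]
  | succ s ih =>
    simp_rw [tsum_pow_mul_admissibleTail_eq_tsum_tsum, tsum_pow_mul_admissibleHead_succ hyz, ih,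
      tsum_inv_mul_connectedSum hz]

theorem connectedSum_zero_eq (hyz : y + z = 1) (hz : 0 < z) (s : ℕ) :
    connectedSum z s 0 = ∑' e, (y : ℝ≥0∞) ^ e * zetaENN (s + e + 1) := by
  simp_rw [connectedSum_zero_left hz, zetaENN, ← ENNReal.tsum_mul_left]
  rw [ENNReal.tsum_comm]
  refine tsum_congr fun m => ?_
  rw [← tsum_pow_mul_inv_pow_succ hyz, ← ENNReal.tsum_mul_left]
  refine tsum_congr fun e => ?_
  ring

theorem tsum_pow_mul_admissibleTail_zero (hy : y < 1) (s : ℕ) :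
    ∑' e, (y : ℝ≥0∞) ^ e * admissibleTail s e 0 = ∑' e, (y : ℝ≥0∞) ^ e * zetaENN (s + e + 2) := by
  have hyz : y + (1 - y) = 1 := add_tsub_cancel_of_le hy.le
  rw [tsum_pow_mul_admissibleTail_eq_connectedSum hyz (tsub_pos_of_lt hy),
    connectedSum_zero_eq hyz (tsub_pos_of_lt hy)]
  simp only [add_right_comm s]

end GeneratingFunction

theorem admissibleTail_zero (s e : ℕ) : admissibleTail s e 0 = zetaENN (s + e + 2) := by
  refine congrFun (eq_of_forall_tsum_pow_mul_eq (a := fun e => admissibleTail s e 0)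
    (b := fun e => zetaENN (s + e + 2)) one_pos (fun y hy => ?_)
    fun y hy => tsum_pow_mul_admissibleTail_zero hy s) e
  refine ne_top_of_le_ne_top (ENNReal.mul_ne_top (b := zetaENN 2) ?_ (zetaENN_ne_top one_lt_two))
    ((ENNReal.tsum_le_tsum fun e => mul_le_mul_right ?_ _).trans_eq ENNReal.tsum_mul_right)
  · rw [ENNReal.tsum_geometric, ENNReal.inv_ne_top]
    exact (tsub_pos_of_lt (by exact_mod_cast hy)).ne'
  · rw [add_comm]
    exact zetaENN_add_le 2 (s + e)

/-! ### Interpolated multiple zeta values -/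

/-- The tail `∑_{a < n₁ < ⋯ < n_r} n₁^{-k₁} ⋯ n_r^{-k_r}` of a multiple zeta value, as an iterated
sum in `ℝ≥0∞`. -/
noncomputable def mzvTail : List ℕ → ℕ → ℝ≥0∞
  | [], _ => 1
  | c :: k, a => ∑' j : ℕ, ((a + j + 1 : ℕ) : ℝ≥0∞)⁻¹ ^ c * mzvTail k (a + j + 1)

theorem strictMono_vecCons_cons_coe {k : ℕ} {a : ℕ} {n : ℕ+} {g : Fin k → ℕ+} :
    StrictMono (Matrix.vecCons a fun i => ((Fin.cons n g : Fin (k + 1) → ℕ+) i : ℕ)) ↔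
      a < n ∧ StrictMono (Matrix.vecCons (n : ℕ) fun i => (g i : ℕ)) := by
  rw [strictMono_vecCons]
  refine and_congr Iff.rfl (iff_of_eq (congrArg _ (funext fun i => ?_)))
  cases i using Fin.cases <;> rfl

open Classical in
theorem mzvTail_eq_tsum (k : List ℕ) (a : ℕ) : mzvTail k a =
    ∑' f : Fin k.length → ℕ+, if StrictMono (Matrix.vecCons a fun i => (f i : ℕ)) then
      ∏ i, ((f i : ℕ) : ℝ≥0∞)⁻¹ ^ k.get i else 0 := by
  induction k generalizing a with
  | nil =>
    change 1 = ∑' f : Fin 0 → ℕ+, _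
    simp [Subsingleton.strictMono]
  | cons c k ih =>
    rw [mzvTail, ← tsum_pnat_ite_lt (fun n => (n : ℝ≥0∞)⁻¹ ^ c * mzvTail k n)]
    change _ = ∑' f : Fin (k.length + 1) → ℕ+, _
    rw [← (Fin.consEquiv fun _ => ℕ+).tsum_eq, ENNReal.tsum_prod']
    refine tsum_congr fun n => ?_
    split_ifs with hn
    · rw [ih, ← ENNReal.tsum_mul_left]
      refine tsum_congr fun g => ?_
      simp [Fin.consEquiv, -strictMono_vecCons, strictMono_vecCons_cons_coe, hn, Fin.prod_univ_succ]
    · simp [Fin.consEquiv, -strictMono_vecCons, strictMono_vecCons_cons_coe, hn]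

theorem strictMono_vecCons_zero_coe {k : ℕ} {f : Fin k → ℕ+} :
    StrictMono (Matrix.vecCons 0 fun i => (f i : ℕ)) ↔ StrictMono f := by
  cases k with
  | zero => exact iff_of_true (Subsingleton.strictMono _) (Subsingleton.strictMono _)
  | succ k => exact strictMono_vecCons.trans (and_iff_right (f 0).pos)

theorem mzvL_eq_toReal_mzvTail (k : List ℕ) : mzvL k = (mzvTail k 0).toReal := by
  classical
  have h : mzvTail k 0 = ∑' f : {f : Fin k.length → ℕ+ // StrictMono f},
      ∏ i, ((f.1 i : ℕ) : ℝ≥0∞)⁻¹ ^ k.get i := by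
    simp_rw [mzvTail_eq_tsum, strictMono_vecCons_zero_coe]
    refine Eq.trans (tsum_congr fun f => ?_)
      (tsum_subtype {f : Fin k.length → ℕ+ | StrictMono f}
        fun f => ∏ i, ((f i : ℕ) : ℝ≥0∞)⁻¹ ^ k.get i).symm
    simp only [Set.indicator_apply, Set.mem_ofPred_eq]
  rw [h, mzvL, ENNReal.tsum_toReal_eq fun f => ENNReal.prod_ne_top fun i _ => by simp]
  simp [ENNReal.toReal_prod]

/-- The tail `∑ t ^ (r - dep k') ζ_{> a}(k')` of the interpolated multiple zeta value `ζ^t(k)` for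
`t ≥ 0`, all of whose summation variables exceed `a`. -/
noncomputable def interpTail (t : ℝ≥0∞) (k : List ℕ) (a : ℕ) : ℝ≥0∞ :=
  ((fills k).map fun k' => t ^ (k.length - k'.length) * mzvTail k' a).sum

theorem length_le_of_mem_fills {k k' : List ℕ} (h : k' ∈ fills k) : k'.length ≤ k.length := by
  induction k using fills.induct generalizing k' with
  | case1 => simp_all [fills]
  | case2 a => simp_all [fills]
  | case3 a b rest ih_comma ih_plus =>
    rw [fills, List.mem_append, List.mem_map] at h
    rcases h with ⟨l, hl, rfl⟩ | hl
    · simpa using ih_comma hl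
    · exact (ih_plus hl).trans (by simp)

theorem interpTail_singleton (t : ℝ≥0∞) (c a : ℕ) :
    interpTail t [c] a = ∑' j : ℕ, ((a + j + 1 : ℕ) : ℝ≥0∞)⁻¹ ^ c := by
  simp [interpTail, fills, mzvTail]

theorem interpTail_cons_cons (t : ℝ≥0∞) (c b : ℕ) (k : List ℕ) (a : ℕ) :
    interpTail t (c :: b :: k) a =
      ∑' j : ℕ, ((a + j + 1 : ℕ) : ℝ≥0∞)⁻¹ ^ c * interpTail t (b :: k) (a + j + 1) +
        t * interpTail t ((c + b) :: k) a := by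
  simp_rw [interpTail, fills, List.map_append, List.sum_append, List.map_map,
    ← List.sum_map_mul_left, ← list_sum_tsum]
  congr 2
  · refine List.map_congr_left fun l _ => ?_
    simp only [Function.comp, mzvTail, ← ENNReal.tsum_mul_left, List.length_cons,
      Nat.add_sub_add_right, mul_left_comm (t ^ _)]
  · refine List.map_congr_left fun l hl => ?_
    have := length_le_of_mem_fills hl
    simp only [List.length_cons] at this ⊢
    rw [← mul_assoc, ← pow_succ', ← Nat.sub_add_comm this]

/-- The part of `interpTail` with smallest summation variable equal to `n`. A plus sign in the first
box keeps the variable `n` and costs a factor `t`; a comma passes to a larger variable. The empty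
index has no summation variable and gets the junk value `0`. -/
noncomputable def interpHead (t : ℝ≥0∞) : List ℕ → ℕ → ℝ≥0∞
  | [], _ => 0
  | [c], n => (n : ℝ≥0∞)⁻¹ ^ c
  | c :: b :: k, n => (n : ℝ≥0∞)⁻¹ ^ c *
      (t * interpHead t (b :: k) n + ∑' j : ℕ, interpHead t (b :: k) (n + j + 1))

theorem interpHead_add_cons (t : ℝ≥0∞) (c b : ℕ) (k : List ℕ) (n : ℕ) :
    interpHead t ((c + b) :: k) n = (n : ℝ≥0∞)⁻¹ ^ c * interpHead t (b :: k) n := by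
  cases k <;> simp only [interpHead, pow_add, mul_assoc]

theorem interpTail_cons (t : ℝ≥0∞) (c : ℕ) (k : List ℕ) (a : ℕ) :
    interpTail t (c :: k) a = ∑' j : ℕ, interpHead t (c :: k) (a + j + 1) := by
  induction k generalizing c a with
  | nil => simp only [interpTail_singleton, interpHead]
  | cons b k ih =>
    simp_rw [interpTail_cons_cons, ih, interpHead_add_cons, interpHead, mul_add, ENNReal.tsum_add,
      mul_left_comm _ t, ENNReal.tsum_mul_left]
    rw [add_comm]

theorem interpTail_eq_tsum (t : ℝ≥0∞) {k : List ℕ} (hk : k ≠ []) (a : ℕ) :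
    interpTail t k a = ∑' j : ℕ, interpHead t k (a + j + 1) := by
  obtain ⟨c, k, rfl⟩ := List.exists_cons_of_ne_nil hk
  exact interpTail_cons t c k a

theorem interpHead_cons (t : ℝ≥0∞) (c : ℕ) {k : List ℕ} (hk : k ≠ []) (n : ℕ) :
    interpHead t (c :: k) n =
      (n : ℝ≥0∞)⁻¹ ^ c * (t * interpHead t k n + ∑' j : ℕ, interpHead t k (n + j + 1)) := by
  obtain ⟨b, k, rfl⟩ := List.exists_cons_of_ne_nil hk
  rw [interpHead]

theorem mzvTail_le_interpTail {k k' : List ℕ} (h : k' ∈ fills k) (a : ℕ) :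
    mzvTail k' a ≤ interpTail 1 k a := by
  simp only [interpTail, one_pow, one_mul]
  exact List.single_le_sum (fun _ _ => zero_le) _ (List.mem_map_of_mem h)

theorem toReal_interpTail {t : ℝ} (ht : 0 ≤ t) {k : List ℕ}
    (hk : ∀ k' ∈ fills k, mzvTail k' 0 ≠ ∞) :
    (interpTail (.ofReal t) k 0).toReal = zetaT t k := by
  rw [interpTail, toReal_list_sum, List.map_map, zetaT]
  · refine congrArg _ (List.map_congr_left fun k' _ => ?_)
    simp [ht, mzvL_eq_toReal_mzvTail]
  · simp only [List.forall_mem_map]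
    exact fun k' hk' => ENNReal.mul_ne_top (by simp) (hk k' hk')

theorem exists_polynomial_eval_eq_zetaT (k : List ℕ) :
    ∃ P : Polynomial ℝ, ∀ t, P.eval t = zetaT t k := by
  refine ⟨((fills k).map fun k' =>
    Polynomial.X ^ (k.length - k'.length) * Polynomial.C (mzvL k')).sum, fun t => ?_⟩
  rw [zetaT, ← Polynomial.coe_evalRingHom, map_list_sum, List.map_map]
  simp only [Function.comp_def, Polynomial.coe_evalRingHom, Polynomial.eval_mul,
    Polynomial.eval_pow, Polynomial.eval_X, Polynomial.eval_C]

/-! ### The index `({1}^p, 2)` -/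

theorem sum_antidiagonal_succ_pow_mul_admissibleHead (t : ℝ≥0∞) (p n : ℕ) :
    ∑ se ∈ antidiagonal (p + 1), t ^ se.2 * admissibleHead se.1 se.2 n =
      (n : ℝ≥0∞)⁻¹ * (t * ∑ se ∈ antidiagonal p, t ^ se.2 * admissibleHead se.1 se.2 n +
        ∑ se ∈ antidiagonal p, t ^ se.2 * admissibleTail se.1 se.2 n) := by
  cases p with
  | zero =>
    simp [Finset.Nat.sum_antidiagonal_succ, admissibleHead_zero_succ, admissibleHead_succ_zero,
      mul_add, mul_left_comm t]
  | succ p =>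
    rw [Finset.Nat.sum_antidiagonal_succ, Finset.Nat.sum_antidiagonal_succ']
    rw [Finset.Nat.sum_antidiagonal_succ, Finset.Nat.sum_antidiagonal_succ']
    simp_rw [admissibleHead_zero_succ, admissibleHead_succ_zero, admissibleHead_succ_succ, mul_add,
      sum_add_distrib, mul_sum]
    ring_nf

theorem interpHead_replicate_one_append_two (t : ℝ≥0∞) (p n : ℕ) :
    interpHead t (List.replicate p 1 ++ [2]) n =
      ∑ se ∈ antidiagonal p, t ^ se.2 * admissibleHead se.1 se.2 n := by
  induction p generalizing n with
  | zero => simp [interpHead, admissibleHead]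
  | succ p ih =>
    simp_rw [List.replicate_succ, List.cons_append, interpHead_cons t 1 (List.concat_ne_nil _ _),
      ih, sum_antidiagonal_succ_pow_mul_admissibleHead, pow_one, admissibleTail,
      ← ENNReal.tsum_mul_left, Summable.tsum_finsetSum fun _ _ => ENNReal.summable]

theorem interpTail_replicate_one_append_two (t : ℝ≥0∞) (p : ℕ) :
    interpTail t (List.replicate p 1 ++ [2]) 0 =
      (∑ i ∈ range (p + 1), t ^ i) * zetaENN (p + 2) := by
  calc interpTail t (List.replicate p 1 ++ [2]) 0
      = ∑ se ∈ antidiagonal p, t ^ se.2 * admissibleTail se.1 se.2 0 := by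
        simp_rw [interpTail_eq_tsum t (List.concat_ne_nil _ _),
          interpHead_replicate_one_append_two, admissibleTail, ← ENNReal.tsum_mul_left,
          Summable.tsum_finsetSum fun _ _ => ENNReal.summable]
    _ = ∑ se ∈ antidiagonal p, t ^ se.2 * zetaENN (p + 2) :=
        sum_congr rfl fun se hse => by rw [admissibleTail_zero, mem_antidiagonal.mp hse]
    _ = (∑ i ∈ range (p + 1), t ^ i) * zetaENN (p + 2) := by
        rw [← sum_mul, ← Finset.Nat.sum_antidiagonal_swap]
        exact congrArg (· * _) (Finset.Nat.sum_antidiagonal_eq_sum_range_succ (fun i _ => t ^ i) p)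

theorem mzvTail_ne_top_of_mem_fills {p : ℕ} {k : List ℕ}
    (h : k ∈ fills (List.replicate p 1 ++ [2])) :
    mzvTail k 0 ≠ ∞ := by
  refine ne_top_of_le_ne_top ?_ (mzvTail_le_interpTail h 0)
  rw [interpTail_replicate_one_append_two]
  exact ENNReal.mul_ne_top (by simp) (zetaENN_ne_top (by omega))

theorem zetaT_replicate_one_append_two_of_nonneg (p : ℕ) {t : ℝ} (ht : 0 ≤ t) :
    zetaT t (List.replicate p 1 ++ [2]) =
      (∑ i ∈ range (p + 1), t ^ i) * rz (p + 2) := by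
  rw [← toReal_interpTail ht fun _ => mzvTail_ne_top_of_mem_fills,
    interpTail_replicate_one_append_two, ENNReal.toReal_mul, toReal_zetaENN,
    ENNReal.toReal_sum (by simp)]
  simp [ht]

theorem stmt3 (p : ℕ) (t : ℝ) :
    zetaT t (List.replicate p 1 ++ [2]) =
      (∑ i ∈ Finset.range (p + 1), t ^ i) * rz (p + 2) := by
  obtain ⟨P, hP⟩ := exists_polynomial_eval_eq_zetaT (List.replicate p 1 ++ [2])
  let Q : Polynomial ℝ := (∑ i ∈ range (p + 1), .X ^ i) * .C (rz (p + 2))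
  have hQ (x : ℝ) : Q.eval x = (∑ i ∈ range (p + 1), x ^ i) * rz (p + 2) := by
    simp [Q, Polynomial.eval_finsetSum]
  have P_eq_Q : P = Q := Polynomial.eq_of_infinite_eval_eq P Q <|
    (Set.Ici_infinite 0).mono fun x hx =>
      (hP x).trans ((zetaT_replicate_one_append_two_of_nonneg p hx).trans (hQ x).symm)
  rw [← hP, P_eq_Q, hQ]
end

section
/- For every integer $k \geq 0$: if $k$ is even then $\sum_{r+k_1+k_2=k} (-1)^{k_2}\, \xi(\{1\}^r, k_1+1; k_2+1) = \zeta(k+2)$, and if $k$ is odd then this alternating sum equals $0$. Here the sum runs over nonnegative integers $r, k_1, k_2$ with $r+k_1+k_2 = k$. -/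
open scoped BigOperators
open MeasureTheory

/-!
Fix the largest summation index `n`. Since the complete homogeneous sum `h_p(1, 1/2, …, 1/n)` is
`1 / p!` times the `p`-th moment of the maximum of `n` independent standard exponential variables,
expanding the polylogarithm under the integral gives
`ξ({1}^r, k + 1; p + 1) = ∑ n, n ^ (-(k + 2)) * e_r(1, …, 1/(n-1)) * h_p(1, …, 1/n)`.
In the alternating sum, the terms with a given `n` are collected by the product of generating series
`∏_{i<n} (1 + X/i) * (1 - X/n)⁻¹ * ∏_{i≤n} (1 + X/i)⁻¹ = (1 - X²/n²)⁻¹`,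
whose `k`-th coefficient is `n ^ (-k)` for even `k` and `0` for odd `k`.
-/

section SymmetricSeries

open PowerSeries Finset

variable {ι R : Type*} [CommRing R]

/-- The geometric series `1 / (1 - c X)`, as a formal power series. -/
noncomputable def geomSeries (c : R) : R⟦X⟧ := mk (c ^ ·)

/-- The generating series of the elementary symmetric polynomials evaluated at the family
`(a i)_{i ∈ s}`: its `r`-th coefficient is `e_r`. -/
noncomputable def esymmSeries (a : ι → R) (s : Finset ι) : R⟦X⟧ := ∏ i ∈ s, (1 + C (a i) * X)

/-- The generating series of the complete homogeneous symmetric polynomials evaluated at the family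
`(a i)_{i ∈ s}`: its `p`-th coefficient is `h_p`. -/
noncomputable def hsymmSeries (a : ι → R) (s : Finset ι) : R⟦X⟧ := ∏ i ∈ s, geomSeries (a i)

@[simp]
lemma coeff_geomSeries (c : R) (n : ℕ) : coeff n (geomSeries c) = c ^ n := coeff_mk _ _

lemma geomSeries_mul_one_sub (c : R) : geomSeries c * (1 - C c * X) = 1 := by
  have h := congrArg (rescale c) (mk_one_mul_one_sub_eq_one R)
  simpa [geomSeries, rescale_mk, rescale_X] using h

lemma rescale_geomSeries (b c : R) : rescale b (geomSeries c) = geomSeries (b * c) := by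
  ext n
  simp [coeff_rescale, mul_pow]

lemma coeff_geomSeries_mul_geomSeries_neg (c : R) (k : ℕ) :
    coeff k (geomSeries c * geomSeries (-c)) = if Even k then c ^ k else 0 := by
  have h (p : ℕ × ℕ) (hp : p ∈ antidiagonal k) : c ^ p.1 * (-c) ^ p.2 = c ^ k * (-1) ^ p.2 := by
    rw [← mem_antidiagonal.mp hp, neg_pow, pow_add]
    ring
  simp only [coeff_mul, coeff_geomSeries]
  rw [sum_congr rfl h, ← mul_sum, ← Nat.sum_antidiagonal_swap,
    Nat.sum_antidiagonal_eq_sum_range_succ_mk]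
  simp only [Prod.snd_swap, neg_one_geom_sum, Nat.even_add_one, ite_not, mul_ite, mul_one, mul_zero]

lemma coeff_zero_hsymmSeries (a : ι → R) (s : Finset ι) : coeff 0 (hsymmSeries a s) = 1 := by
  rw [coeff_zero_eq_constantCoeff, hsymmSeries, map_prod]
  exact prod_eq_one fun i _ ↦ by simp [← coeff_zero_eq_constantCoeff_apply]

lemma esymmSeries_mul_hsymmSeries_neg (a : ι → R) (s : Finset ι) :
    esymmSeries a s * hsymmSeries (-a) s = 1 := by
  rw [esymmSeries, hsymmSeries, ← prod_mul_distrib]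
  refine prod_eq_one fun i _ ↦ ?_
  simpa [mul_comm] using geomSeries_mul_one_sub (-a i)

lemma coeff_hsymmSeries_neg (a : ι → R) (s : Finset ι) (p : ℕ) :
    coeff p (hsymmSeries (-a) s) = (-1) ^ p * coeff p (hsymmSeries a s) := by
  rw [← coeff_rescale]
  simp [hsymmSeries, map_prod, rescale_geomSeries]

lemma coeff_esymmSeries (a : ι → R) (s : Finset ι) (r : ℕ) :
    coeff r (esymmSeries a s) = ∑ t ∈ powersetCard r s, ∏ i ∈ t, a i := by
  have h (t : Finset ι) : coeff r (∏ i ∈ t, C (a i) * X : R⟦X⟧) =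
      if #t = r then ∏ i ∈ t, a i else 0 := by
    rw [prod_mul_distrib, prod_const, ← map_prod, coeff_C_mul, coeff_X_pow, mul_ite, mul_one,
      mul_zero]
    simp only [eq_comm]
  simp only [esymmSeries, prod_one_add, map_sum, h]
  rw [← sum_filter, powersetCard_eq_filter]

variable [DecidableEq ι]

lemma coeff_succ_hsymmSeries_insert (a : ι → R) {s : Finset ι} {i : ι} (hi : i ∉ s) (p : ℕ) :
    coeff (p + 1) (hsymmSeries a (insert i s)) =
      coeff (p + 1) (hsymmSeries a s) + a i * coeff p (hsymmSeries a (insert i s)) := by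
  have h : hsymmSeries a (insert i s) =
      hsymmSeries a s + C (a i) * (hsymmSeries a (insert i s) * X) := by
    rw [hsymmSeries, prod_insert hi, ← hsymmSeries]
    linear_combination hsymmSeries a s * geomSeries_mul_one_sub (a i)
  conv_lhs => rw [h]
  rw [map_add, coeff_C_mul, coeff_succ_mul_X]

lemma esymmSeries_mul_geomSeries_mul_hsymmSeries_neg_insert (a : ι → R) {s : Finset ι} {i : ι}
    (hi : i ∉ s) :
    esymmSeries a s * geomSeries (a i) * hsymmSeries (-a) (insert i s) =
      geomSeries (a i) * geomSeries (-a i) := by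
  rw [hsymmSeries, prod_insert hi, ← hsymmSeries, Pi.neg_apply]
  linear_combination geomSeries (a i) * geomSeries (-a i) * esymmSeries_mul_hsymmSeries_neg a s

lemma coeff_prod_univ_fin {N : ℕ} (f : Fin N → R⟦X⟧) (k : ℕ) :
    coeff k (∏ i, f i) = ∑ x ∈ Nat.antidiagonalTuple N k, ∏ i, coeff (x i) (f i) := by
  rw [coeff_prod]
  refine sum_equiv Finsupp.equivFunOnFinite (fun l ↦ ?_) fun l _ ↦ rfl
  simp [Nat.mem_antidiagonalTuple]

lemma sum_antidiagonalTuple_esymm_mul_pow_mul_hsymm_insert (a : ι → R) {s : Finset ι}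
    {i : ι} (hi : i ∉ s) (k : ℕ) :
    ∑ f ∈ Nat.antidiagonalTuple 3 k, (-1) ^ f 2 *
        (coeff (f 0) (esymmSeries a s) * a i ^ f 1 * coeff (f 2) (hsymmSeries a (insert i s))) =
      if Even k then a i ^ k else 0 := by
  rw [← coeff_geomSeries_mul_geomSeries_neg,
    ← esymmSeries_mul_geomSeries_mul_hsymmSeries_neg_insert a hi]
  have h := coeff_prod_univ_fin
    ![esymmSeries a s, geomSeries (a i), hsymmSeries (-a) (insert i s)] k
  simp only [Fin.prod_univ_three, Matrix.cons_val, coeff_geomSeries, coeff_hsymmSeries_neg] at h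
  rw [h]
  exact sum_congr rfl fun f _ ↦ mul_left_comm _ _ _

end SymmetricSeries

section GeomBounded

open PowerSeries Finset

variable {ι R : Type*} [CommRing R] [LinearOrder R] [IsStrictOrderedRing R]

/-- The coefficients of `f` are nonnegative and `f` is dominated coefficientwise by `1 / (1 - c X)`;
used to bound symmetric functions of `(a i)_{i ∈ s}` by powers of `∑ i ∈ s, a i`. -/
def GeomBounded (c : R) (f : R⟦X⟧) : Prop := ∀ n, 0 ≤ coeff n f ∧ coeff n f ≤ c ^ n

lemma GeomBounded.mul {c d : R} {f g : R⟦X⟧} (hf : GeomBounded c f) (hg : GeomBounded d g) :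
    GeomBounded (c + d) (f * g) := by
  intro n
  rw [coeff_mul, (Commute.all c d).add_pow']
  refine ⟨sum_nonneg fun p _ ↦ mul_nonneg (hf _).1 (hg _).1, sum_le_sum fun p hp ↦ ?_⟩
  have hfg : coeff p.1 f * coeff p.2 g ≤ c ^ p.1 * d ^ p.2 :=
    mul_le_mul (hf _).2 (hg _).2 (hg _).1 ((hf _).1.trans (hf _).2)
  refine hfg.trans ?_
  rw [nsmul_eq_mul]
  refine le_mul_of_one_le_left ((mul_nonneg (hf _).1 (hg _).1).trans hfg) ?_
  exact_mod_cast Nat.choose_pos (HasAntidiagonal.mem_antidiagonal.mp hp ▸ Nat.le_add_right _ _)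

lemma GeomBounded.prod {c : ι → R} {f : ι → R⟦X⟧} {s : Finset ι}
    (h : ∀ i ∈ s, GeomBounded (c i) (f i)) : GeomBounded (∑ i ∈ s, c i) (∏ i ∈ s, f i) := by
  classical
  induction s using Finset.induction_on with
  | empty =>
    intro n
    rw [prod_empty, sum_empty, coeff_one, zero_pow_eq]
    split_ifs <;> simp
  | insert i s hi ih =>
    rw [sum_insert hi, prod_insert hi]
    exact (h i (mem_insert_self i s)).mul (ih fun j hj ↦ h j (mem_insert_of_mem hj))

lemma geomBounded_geomSeries {c : R} (hc : 0 ≤ c) : GeomBounded c (geomSeries c) := fun n ↦ by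
  simp [pow_nonneg hc]

lemma geomBounded_one_add_C_mul_X {c : R} (hc : 0 ≤ c) : GeomBounded c (1 + C c * X) := by
  rintro (_ | _ | n)
  · simp
  · simp [coeff_one, hc]
  · simp [coeff_one, coeff_succ_mul_X, pow_nonneg hc]

lemma geomBounded_esymmSeries {a : ι → R} {s : Finset ι} (ha : ∀ i ∈ s, 0 ≤ a i) :
    GeomBounded (∑ i ∈ s, a i) (esymmSeries a s) :=
  .prod fun i hi ↦ geomBounded_one_add_C_mul_X (ha i hi)

lemma geomBounded_hsymmSeries {a : ι → R} {s : Finset ι} (ha : ∀ i ∈ s, 0 ≤ a i) :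
    GeomBounded (∑ i ∈ s, a i) (hsymmSeries a s) :=
  .prod fun i hi ↦ geomBounded_geomSeries (ha i hi)

end GeomBounded

section StrictMonoTuples

open Finset

variable {α : Type*}

lemma strictMono_snoc [Preorder α] {r : ℕ} {f : Fin r → α} {x : α} :
    StrictMono (Fin.snoc f x : Fin (r + 1) → α) ↔ StrictMono f ∧ ∀ i, f i < x := by
  simp [← Fin.insertNth_last', Fin.strictMono_insertNth_iff, Fin.castSucc_lt_last,
    (Fin.castSucc_lt_last _).not_ge]

variable (α) [LinearOrder α] [LocallyFiniteOrderBot α]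

/-- A strictly increasing `(r + 1)`-tuple amounts to its last entry `n` together with the set of the
other `r` entries, all below `n`; it turns the nested sum of a polylogarithm into a sum over `n` of
elementary symmetric sums. -/
def strictMonoSnocEquiv (r : ℕ) :
    {f : Fin (r + 1) → α // StrictMono f} ≃ Σ n : α, powersetCard r (Iio n) where
  toFun f := ⟨f.1 (Fin.last r), univ.image (f.1 ∘ Fin.castSucc), mem_powersetCard.mpr
    ⟨by simp [subset_iff, f.2.lt_iff_lt, Fin.castSucc_lt_last],
      (card_image_of_injective _ (f.2.comp Fin.strictMono_castSucc).injective).trans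
        (card_fin r)⟩⟩
  invFun x := ⟨Fin.snoc (x.2.1.orderEmbOfFin (mem_powersetCard.mp x.2.2).2) x.1,
    strictMono_snoc.mpr ⟨OrderEmbedding.strictMono _, fun i ↦
      mem_Iio.mp ((mem_powersetCard.mp x.2.2).1 (orderEmbOfFin_mem ..))⟩⟩
  left_inv f := by
    ext i
    refine Fin.lastCases (by simp) (fun j ↦ ?_) i
    dsimp only
    rw [Fin.snoc_castSucc, ← orderEmbOfFin_unique _ (fun j ↦ mem_image_of_mem _ (mem_univ j))
      (f.2.comp Fin.strictMono_castSucc)]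
    rfl
  right_inv x := Sigma.subtype_ext (by simp) <| by
    convert image_orderEmbOfFin_univ x.2.1 (mem_powersetCard.mp x.2.2).2 using 2
    ext
    simp

end StrictMonoTuples

section MaxExpMoment

open Set Filter Topology Nat

/-- The density at `t ≥ 0` of the maximum of `n` independent standard exponential variables, whose
distribution function is `(1 - exp (-t)) ^ n`. For `n = 0` the truncated exponent `n - 1` is
harmless, because of the factor `n`. -/
noncomputable def maxExpDensity (n : ℕ) (t : ℝ) : ℝ :=
  n * (1 - Real.exp (-t)) ^ (n - 1) * Real.exp (-t)

/-- The `p`-th moment of the maximum of `n` independent standard exponential variables, divided by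
`p!`. For `n = 0` it is `0`, also when `p = 0`. -/
noncomputable def maxExpMoment (p n : ℕ) : ℝ :=
  (∫ t in Ioi (0 : ℝ), t ^ p * maxExpDensity n t) / p !

lemma maxExpDensity_zero (t : ℝ) : maxExpDensity 0 t = 0 := by simp [maxExpDensity]

lemma maxExpDensity_nonneg (n : ℕ) {t : ℝ} (ht : 0 ≤ t) : 0 ≤ maxExpDensity n t := by
  have : 0 ≤ 1 - Real.exp (-t) := by simpa
  unfold maxExpDensity
  positivity

lemma maxExpDensity_le (n : ℕ) {t : ℝ} (ht : 0 ≤ t) : maxExpDensity n t ≤ n * Real.exp (-t) := by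
  have h₀ : 0 ≤ 1 - Real.exp (-t) := by simpa
  have h₁ : 1 - Real.exp (-t) ≤ 1 := by simp [Real.exp_nonneg]
  unfold maxExpDensity
  gcongr
  exact mul_le_of_le_one_right n.cast_nonneg (pow_le_one₀ h₀ h₁)

lemma continuous_maxExpDensity (n : ℕ) : Continuous (maxExpDensity n) := by
  unfold maxExpDensity
  fun_prop

lemma hasDerivAt_one_sub_exp_neg_pow (n : ℕ) (t : ℝ) :
    HasDerivAt (fun t ↦ (1 - Real.exp (-t)) ^ n) (maxExpDensity n t) t := by
  have h := (((hasDerivAt_neg t).exp).const_sub 1).pow n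
  exact h.congr_deriv (by simp [maxExpDensity])

lemma maxExpDensity_succ_div (n : ℕ) (t : ℝ) :
    maxExpDensity (n + 1) t / (n + 1) =
      (1 - Real.exp (-t)) ^ n - (1 - Real.exp (-t)) ^ (n + 1) := by
  rw [div_eq_iff (by positivity)]
  simp only [maxExpDensity, add_tsub_cancel_right, cast_add_one]
  ring

lemma hasDerivAt_maxExpDensity_succ_div (n : ℕ) (t : ℝ) :
    HasDerivAt (fun t ↦ maxExpDensity (n + 1) t / (n + 1))
      (maxExpDensity n t - maxExpDensity (n + 1) t) t := by
  simp only [maxExpDensity_succ_div]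
  exact (hasDerivAt_one_sub_exp_neg_pow n t).sub (hasDerivAt_one_sub_exp_neg_pow (n + 1) t)

lemma integrableOn_pow_mul_exp_neg (p : ℕ) :
    IntegrableOn (fun t : ℝ ↦ t ^ p * Real.exp (-t)) (Ioi 0) :=
  (Real.GammaIntegral_convergent (s := p + 1) (by positivity)).congr_fun
    (fun t _ ↦ by simp [mul_comm]) measurableSet_Ioi

lemma pow_mul_maxExpDensity_nonneg (p n : ℕ) {t : ℝ} (ht : 0 ≤ t) :
    0 ≤ t ^ p * maxExpDensity n t :=
  mul_nonneg (pow_nonneg ht p) (maxExpDensity_nonneg n ht)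

lemma pow_mul_maxExpDensity_le (p n : ℕ) {t : ℝ} (ht : 0 ≤ t) :
    t ^ p * maxExpDensity n t ≤ n * (t ^ p * Real.exp (-t)) :=
  (mul_le_mul_of_nonneg_left (maxExpDensity_le n ht) (pow_nonneg ht p)).trans_eq
    (mul_left_comm _ _ _)

lemma integrableOn_pow_mul_maxExpDensity (p n : ℕ) :
    IntegrableOn (fun t ↦ t ^ p * maxExpDensity n t) (Ioi 0) := by
  refine Integrable.mono' ((integrableOn_pow_mul_exp_neg p).const_mul n) ?_ ?_
  · exact ((continuous_pow p).mul (continuous_maxExpDensity n)).aestronglyMeasurable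
  · filter_upwards [ae_restrict_mem measurableSet_Ioi] with t ht
    rw [Real.norm_of_nonneg (pow_mul_maxExpDensity_nonneg p n (mem_Ioi.mp ht).le)]
    exact pow_mul_maxExpDensity_le p n (mem_Ioi.mp ht).le

lemma tendsto_pow_mul_maxExpDensity_atTop (p n : ℕ) :
    Tendsto (fun t ↦ t ^ p * maxExpDensity n t) atTop (𝓝 0) := by
  have h := (Real.tendsto_pow_mul_exp_neg_atTop_nhds_zero p).const_mul (n : ℝ)
  rw [mul_zero] at h
  refine squeeze_zero' ?_ ?_ h <;> filter_upwards [eventually_ge_atTop 0] with t ht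
  exacts [pow_mul_maxExpDensity_nonneg p n ht, pow_mul_maxExpDensity_le p n ht]

lemma maxExpMoment_nonneg (p n : ℕ) : 0 ≤ maxExpMoment p n :=
  div_nonneg (setIntegral_nonneg measurableSet_Ioi fun _ ht ↦
    pow_mul_maxExpDensity_nonneg p n (mem_Ioi.mp ht).le) (cast_nonneg _)

lemma maxExpMoment_zero_right (p : ℕ) : maxExpMoment p 0 = 0 := by
  simp [maxExpMoment, maxExpDensity_zero]

lemma maxExpMoment_zero_succ (n : ℕ) : maxExpMoment 0 (n + 1) = 1 := by
  have hlim : Tendsto (fun t ↦ (1 - Real.exp (-t)) ^ (n + 1)) atTop (𝓝 1) := by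
    simpa using ((Real.tendsto_exp_neg_atTop_nhds_zero).const_sub 1).pow (n + 1)
  have h := integral_Ioi_of_hasDerivAt_of_tendsto'
    (fun t _ ↦ hasDerivAt_one_sub_exp_neg_pow (n + 1) t)
    (by simpa using integrableOn_pow_mul_maxExpDensity 0 (n + 1)) hlim
  simpa [maxExpMoment] using h

lemma maxExpMoment_succ_succ (p n : ℕ) :
    maxExpMoment (p + 1) (n + 1) =
      maxExpMoment (p + 1) n + (n + 1 : ℝ)⁻¹ * maxExpMoment p (n + 1) := by
  -- Integrate the derivative of `t ^ (p + 1) * (G t ^ n - G t ^ (n + 1))` over the half line, where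
  -- `G t = 1 - exp (-t)`; the boundary terms vanish.
  have hderiv (t : ℝ) : HasDerivAt (fun t ↦ t ^ (p + 1) * (maxExpDensity (n + 1) t / (n + 1)))
      ((p + 1) / (n + 1) * (t ^ p * maxExpDensity (n + 1) t) +
        (t ^ (p + 1) * maxExpDensity n t - t ^ (p + 1) * maxExpDensity (n + 1) t)) t := by
    refine ((hasDerivAt_pow (p + 1) t).mul (hasDerivAt_maxExpDensity_succ_div n t)).congr_deriv ?_
    push_cast
    ring
  have hlim : Tendsto (fun t ↦ t ^ (p + 1) * (maxExpDensity (n + 1) t / (n + 1))) atTop (𝓝 0) := by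
    simpa [mul_div_assoc] using
      (tendsto_pow_mul_maxExpDensity_atTop (p + 1) (n + 1)).div_const (n + 1 : ℝ)
  have hint₁ := (integrableOn_pow_mul_maxExpDensity p (n + 1)).const_mul ((p + 1) / (n + 1) : ℝ)
  have hint₂ := integrableOn_pow_mul_maxExpDensity (p + 1) n
  have hint₃ := integrableOn_pow_mul_maxExpDensity (p + 1) (n + 1)
  have hint₂₃ : IntegrableOn (fun t ↦
      t ^ (p + 1) * maxExpDensity n t - t ^ (p + 1) * maxExpDensity (n + 1) t) (Ioi 0) :=
    hint₂.sub hint₃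
  have h := integral_Ioi_of_hasDerivAt_of_tendsto' (fun t _ ↦ hderiv t)
    (hint₁.add hint₂₃) hlim
  rw [integral_add hint₁ hint₂₃, integral_sub hint₂ hint₃, integral_const_mul,
    zero_pow p.succ_ne_zero, zero_mul, sub_zero] at h
  simp only [maxExpMoment, factorial_succ, cast_mul, cast_add_one]
  field_simp at h ⊢
  linarith

lemma one_sub_exp_neg_pow_div_exp_sub_one {n : ℕ} (hn : n ≠ 0) {t : ℝ} (ht : 0 < t) :
    (1 - Real.exp (-t)) ^ n / (Real.exp t - 1) = (n : ℝ)⁻¹ * maxExpDensity n t := by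
  obtain ⟨m, rfl⟩ := exists_eq_succ_of_ne_zero hn
  have h₁ : Real.exp t - 1 ≠ 0 := sub_ne_zero.mpr (Real.one_lt_exp_iff.mpr ht).ne'
  have h₂ : Real.exp (-t) * (Real.exp t - 1) = 1 - Real.exp (-t) := by
    rw [mul_sub, mul_one, ← Real.exp_add, neg_add_cancel, Real.exp_zero]
  rw [div_eq_iff h₁, maxExpDensity, succ_sub_one, pow_succ, ← h₂]
  field_simp

lemma integral_pow_mul_maxExpDensity (p n : ℕ) :
    ∫ t in Ioi 0, t ^ p * maxExpDensity n t = p ! * maxExpMoment p n := by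
  rw [maxExpMoment, mul_div_cancel₀ _ (by positivity)]

lemma integral_tsum_mul_one_sub_exp_neg_pow {ι : Type*} [Countable ι] {c : ι → ℝ} {N : ι → ℕ}
    {p : ℕ} (hc : 0 ≤ c) (hN : ∀ i, N i ≠ 0)
    (hs : Summable fun i ↦ c i * ((N i : ℝ)⁻¹ * maxExpMoment p (N i))) :
    1 / Real.Gamma (p + 1) * ∫ t in Ioi 0, t ^ ((p + 1 : ℝ) - 1) / (Real.exp t - 1) *
        ∑' i, c i * (1 - Real.exp (-t)) ^ N i =
      ∑' i, c i * ((N i : ℝ)⁻¹ * maxExpMoment p (N i)) := by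
  let F (i : ι) (t : ℝ) : ℝ := c i * (N i : ℝ)⁻¹ * (t ^ p * maxExpDensity (N i) t)
  have hF_nonneg (i : ι) (t : ℝ) (ht : t ∈ Ioi 0) : 0 ≤ F i t :=
    mul_nonneg (mul_nonneg (hc i) (by positivity)) (pow_mul_maxExpDensity_nonneg _ _ ht.le)
  have hF_int (i : ι) : IntegrableOn (F i) (Ioi 0) :=
    (integrableOn_pow_mul_maxExpDensity p (N i)).const_mul _
  have hF_integral (i : ι) : ∫ t in Ioi 0, F i t =
      p ! * (c i * ((N i : ℝ)⁻¹ * maxExpMoment p (N i))) := by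
    rw [integral_const_mul, integral_pow_mul_maxExpDensity]
    ring
  have hF_norm (i : ι) : ∫ t in Ioi 0, ‖F i t‖ = ∫ t in Ioi 0, F i t :=
    setIntegral_congr_fun measurableSet_Ioi fun t ht ↦ Real.norm_of_nonneg (hF_nonneg i t ht)
  have hF_tsum (t : ℝ) (ht : t ∈ Ioi 0) : t ^ ((p + 1 : ℝ) - 1) / (Real.exp t - 1) *
      ∑' i, c i * (1 - Real.exp (-t)) ^ N i = ∑' i, F i t := by
    rw [add_sub_cancel_right, Real.rpow_natCast, ← tsum_mul_left]
    refine tsum_congr fun i ↦ ?_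
    linear_combination t ^ p * c i * one_sub_exp_neg_pow_div_exp_sub_one (hN i) ht
  have hsum : HasSum (fun i ↦ ∫ t in Ioi 0, F i t) (∫ t in Ioi 0, ∑' i, F i t) :=
    hasSum_integral_of_summable_integral_norm hF_int
      (by simpa only [hF_norm, hF_integral] using hs.mul_left _)
  rw [setIntegral_congr_fun measurableSet_Ioi hF_tsum, ← hsum.tsum_eq, Real.Gamma_nat_eq_factorial]
  simp only [hF_integral]
  rw [tsum_mul_left, one_div, inv_mul_cancel_left₀ (by positivity)]

end MaxExpMoment

section Recip

open Finset PowerSeries Filter Asymptotics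

/-- The weight `1 / n` of a summation index `n`, as a real number: the family at which the symmetric
functions are evaluated. -/
noncomputable def recip (n : ℕ+) : ℝ := ((n : ℕ) : ℝ)⁻¹

lemma recip_nonneg (n : ℕ+) : 0 ≤ recip n := inv_nonneg.mpr (Nat.cast_nonneg _)

lemma recip_le_one (n : ℕ+) : recip n ≤ 1 :=
  inv_le_one_of_one_le₀ (mod_cast n.pos)

lemma Iic_one_eq_singleton : Iic (1 : ℕ+) = {1} := rfl

lemma Iic_add_one_eq_insert (n : ℕ+) : Iic (n + 1) = insert (n + 1) (Iic n) := by
  ext i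
  simp [le_iff_eq_or_lt]

lemma maxExpMoment_eq_coeff_hsymmSeries (p : ℕ) (n : ℕ+) :
    maxExpMoment p n = coeff p (hsymmSeries recip (Iic n)) := by
  induction p generalizing n with
  | zero => rw [coeff_zero_hsymmSeries, ← n.natPred_add_one, maxExpMoment_zero_succ]
  | succ p ihp =>
    induction n using PNat.recOn with
    | one =>
      have hp : maxExpMoment p 1 = 1 := by
        simpa [Iic_one_eq_singleton, hsymmSeries, recip] using ihp 1
      simpa [Iic_one_eq_singleton, hsymmSeries, recip, maxExpMoment_zero_right, hp] using
        maxExpMoment_succ_succ p 0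
    | succ n ihn =>
      have hp := ihp (n + 1)
      rw [Iic_add_one_eq_insert] at hp ⊢
      rw [coeff_succ_hsymmSeries_insert _ (by simp), ← hp, ← ihn]
      simp [recip, maxExpMoment_succ_succ]

lemma sum_recip_Iic (n : ℕ+) : ∑ i ∈ Iic n, recip i = harmonic n := by
  induction n using PNat.recOn with
  | one => simp [Iic_one_eq_singleton, recip]
  | succ n ih =>
    rw [Iic_add_one_eq_insert, sum_insert (by simp), ih, PNat.add_coe, PNat.one_coe, harmonic_succ]
    simp [recip, add_comm]

lemma coeff_hsymmSeries_recip_Iic_le (p : ℕ) (n : ℕ+) :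
    coeff p (hsymmSeries recip (Iic n)) ≤ (harmonic n : ℝ) ^ p :=
  sum_recip_Iic n ▸ (geomBounded_hsymmSeries (fun i _ ↦ recip_nonneg i) p).2

lemma coeff_esymmSeries_recip_Iio_le (r : ℕ) (n : ℕ+) :
    coeff r (esymmSeries recip (Iio n)) ≤ (harmonic n : ℝ) ^ r := by
  refine (geomBounded_esymmSeries (fun i _ ↦ recip_nonneg i) r).2.trans ?_
  refine pow_le_pow_left₀ (sum_nonneg fun i _ ↦ recip_nonneg i) ?_ r
  rw [← sum_recip_Iic]
  exact sum_le_sum_of_subset_of_nonneg Iio_subset_Iic_self fun i _ _ ↦ recip_nonneg i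

lemma isBigO_harmonic_log :
    (fun n : ℕ ↦ (harmonic n : ℝ)) =O[atTop] fun n : ℕ ↦ Real.log n := by
  have h : (fun n : ℕ ↦ 1 + Real.log n) =O[atTop] fun n : ℕ ↦ Real.log n :=
    (Real.isLittleO_const_log_atTop.isBigO.comp_tendsto tendsto_natCast_atTop_atTop).add
      (isBigO_refl _ _)
  refine .trans (.of_norm_le fun n ↦ ?_) h
  rw [Real.norm_of_nonneg (by rw [harmonic]; push_cast; positivity)]
  exact harmonic_le_one_add_log n

lemma summable_harmonic_pow_div_sq (q : ℕ) :
    Summable fun n : ℕ ↦ (harmonic n : ℝ) ^ q / (n : ℝ) ^ 2 := by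
  have hlog : (fun n : ℕ ↦ (harmonic n : ℝ) ^ q) =O[atTop] fun n : ℕ ↦ (n : ℝ) ^ (1 / 2 : ℝ) := by
    refine (isBigO_harmonic_log.pow q).trans ?_
    simpa only [Real.rpow_natCast] using! ((isLittleO_log_rpow_rpow_atTop q
      (one_half_pos (α := ℝ))).comp_tendsto tendsto_natCast_atTop_atTop).isBigO
  refine summable_of_isBigO_nat (Real.summable_nat_rpow.mpr (by norm_num : (-3 / 2 : ℝ) < -1)) ?_
  refine (hlog.mul (isBigO_refl (fun n : ℕ ↦ ((n : ℝ) ^ 2)⁻¹) atTop)).congr' ?_ ?_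
  · simp [div_eq_mul_inv]
  · filter_upwards [eventually_gt_atTop 0] with n hn
    rw [← Real.rpow_natCast, ← Real.rpow_neg n.cast_nonneg, ← Real.rpow_add (by positivity)]
    norm_num

lemma summable_coeff_esymmSeries_mul_coeff_hsymmSeries (r k p : ℕ) :
    Summable fun n : ℕ+ ↦ recip n ^ (k + 1) * coeff r (esymmSeries recip (Iio n)) *
      (recip n * coeff p (hsymmSeries recip (Iic n))) := by
  have hs := (summable_harmonic_pow_div_sq (r + p)).comp_injective PNat.coe_injective
  have hr (n : ℕ+) : 0 ≤ coeff r (esymmSeries recip (Iio n)) :=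
    (geomBounded_esymmSeries (fun i _ ↦ recip_nonneg i) r).1
  have hp (n : ℕ+) : 0 ≤ coeff p (hsymmSeries recip (Iic n)) :=
    (geomBounded_hsymmSeries (fun i _ ↦ recip_nonneg i) p).1
  refine hs.of_nonneg_of_le (fun n ↦ ?_) fun n ↦ ?_
  · exact mul_nonneg (mul_nonneg (pow_nonneg (recip_nonneg n) _) (hr n))
      (mul_nonneg (recip_nonneg n) (hp n))
  have hk : recip n ^ (k + 1) ≤ recip n :=
    pow_le_of_le_one (recip_nonneg n) (recip_le_one n) k.succ_ne_zero
  calc _ ≤ recip n * (harmonic n : ℝ) ^ r * (recip n * (harmonic n : ℝ) ^ p) :=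
        mul_le_mul
          (mul_le_mul hk (coeff_esymmSeries_recip_Iio_le r n) (hr n) (recip_nonneg n))
          (mul_le_mul_of_nonneg_left (coeff_hsymmSeries_recip_Iic_le p n) (recip_nonneg n))
          (mul_nonneg (recip_nonneg n) (hp n))
          (mul_nonneg (recip_nonneg n) ((hr n).trans (coeff_esymmSeries_recip_Iio_le r n)))
    _ = _ := by
        simp only [recip, Function.comp_apply]
        ring

end Recip

section ArakawaKaneko

open Finset PowerSeries

lemma LiL_eq_tsum_of_length {k : List ℕ} {r : ℕ} (hk : k.length = r + 1) (z : ℝ) :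
    LiL k z = ∑' m : {f : Fin (r + 1) → ℕ+ // StrictMono f},
      (∏ i, recip (m.1 i) ^ k.get (i.cast hk.symm)) * z ^ (m.1 (Fin.last r) : ℕ) := by
  have hlast (h : k.length - 1 < k.length) :
      (⟨k.length - 1, h⟩ : Fin k.length) = (Fin.last r).cast hk.symm := Fin.ext (by simp [hk])
  simp only [LiL, dif_pos (hk ▸ r.succ_pos : 0 < k.length), hlast]
  generalize k.get = w
  generalize k.length = N at hk w
  subst hk
  refine tsum_congr fun m ↦ ?_
  simp only [recip, inv_pow, prod_inv_distrib, Fin.cast_eq_self, div_eq_inv_mul]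

lemma prod_recip_pow_get_replicate_append {r k : ℕ} (f : Fin (r + 1) → ℕ+)
    (h : r + 1 = (List.replicate r 1 ++ [k]).length) :
    ∏ i, recip (f i) ^ (List.replicate r 1 ++ [k]).get (i.cast h) =
      recip (f (Fin.last r)) ^ k * ∏ i : Fin r, recip (f i.castSucc) := by
  simp [Fin.prod_univ_castSucc, List.getElem_append, mul_comm]

lemma LiL_replicate_one_append (r k : ℕ) (z : ℝ) :
    LiL (List.replicate r 1 ++ [k]) z = ∑' x : Σ n : ℕ+, powersetCard r (Iio n),
      recip x.1 ^ k * (∏ i ∈ x.2.1, recip i) * z ^ (x.1 : ℕ) := by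
  rw [LiL_eq_tsum_of_length (r := r) (by simp), ← (strictMonoSnocEquiv ℕ+ r).tsum_eq]
  refine tsum_congr fun f ↦ ?_
  rw [prod_recip_pow_get_replicate_append]
  simp only [strictMonoSnocEquiv, Equiv.coe_fn_mk]
  rw [prod_image (f.2.comp Fin.strictMono_castSucc).injective.injOn]
  rfl

lemma xiL_replicate_one_append (r k p : ℕ) :
    xiL (List.replicate r 1 ++ [k + 1]) (p + 1) =
      ∑' n : ℕ+, recip n ^ (k + 1) * coeff r (esymmSeries recip (Iio n)) *
        (recip n * coeff p (hsymmSeries recip (Iic n))) := by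
  let g (x : Σ n : ℕ+, powersetCard r (Iio n)) : ℝ :=
    recip x.1 ^ (k + 1) * (∏ i ∈ x.2.1, recip i) * (recip x.1 * maxExpMoment p x.1)
  have hg_fiber (n : ℕ+) : ∑' t : powersetCard r (Iio n), g ⟨n, t⟩ =
      recip n ^ (k + 1) * coeff r (esymmSeries recip (Iio n)) *
        (recip n * coeff p (hsymmSeries recip (Iic n))) := by
    rw [Finset.tsum_subtype (powersetCard r (Iio n)) fun t ↦
      recip n ^ (k + 1) * (∏ i ∈ t, recip i) * (recip n * maxExpMoment p n),
      ← sum_mul, ← mul_sum, ← coeff_esymmSeries, maxExpMoment_eq_coeff_hsymmSeries]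
  have hc (x : Σ n : ℕ+, powersetCard r (Iio n)) :
      0 ≤ recip x.1 ^ (k + 1) * ∏ i ∈ x.2.1, recip i :=
    mul_nonneg (pow_nonneg (recip_nonneg _) _) (prod_nonneg fun i _ ↦ recip_nonneg i)
  have hg_nonneg (x) : 0 ≤ g x :=
    mul_nonneg (hc x) (mul_nonneg (recip_nonneg _) (maxExpMoment_nonneg _ _))
  have hg : Summable g := by
    refine (summable_sigma_of_nonneg hg_nonneg).mpr ⟨fun n ↦ (hasSum_fintype _).summable, ?_⟩
    simp only [hg_fiber]
    exact summable_coeff_esymmSeries_mul_coeff_hsymmSeries r k p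
  calc _ = ∑' x, g x := by
        simp only [xiL, LiL_replicate_one_append]
        exact integral_tsum_mul_one_sub_exp_neg_pow hc (fun x ↦ x.1.ne_zero) hg
    _ = _ := by
        rw [hg.tsum_sigma]
        exact tsum_congr hg_fiber

lemma sum_antidiagonalTuple_neg_one_pow_mul_xiL (k : ℕ) :
    ∑ f ∈ Finset.Nat.antidiagonalTuple 3 k,
        (-1 : ℝ) ^ f 2 * xiL (List.replicate (f 0) 1 ++ [f 1 + 1]) (f 2 + 1) =
      ∑' n, if Even k then recip n ^ (k + 2) else 0 := by
  simp only [xiL_replicate_one_append, ← tsum_mul_left]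
  rw [← Summable.tsum_finsetSum fun f _ ↦
    (summable_coeff_esymmSeries_mul_coeff_hsymmSeries _ _ _).mul_left _]
  refine tsum_congr fun n ↦ ?_
  have h := sum_antidiagonalTuple_esymm_mul_pow_mul_hsymm_insert recip (notMem_Iio_self (b := n)) k
  rw [Iio_insert] at h
  calc _ = recip n ^ 2 * (if Even k then recip n ^ k else 0) := by
        rw [← h, mul_sum]
        exact sum_congr rfl fun f _ ↦ by ring
    _ = _ := by rw [mul_ite, mul_zero, ← pow_add, add_comm]

end ArakawaKaneko

theorem stmt5 (k : ℕ) :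
    (Even k →
      ∑ f ∈ Finset.Nat.antidiagonalTuple 3 k,
          (-1 : ℝ) ^ (f 2) * xiL (List.replicate (f 0) 1 ++ [f 1 + 1]) ((f 2 : ℝ) + 1) =
        rz (k + 2)) ∧
    (Odd k →
      ∑ f ∈ Finset.Nat.antidiagonalTuple 3 k,
          (-1 : ℝ) ^ (f 2) * xiL (List.replicate (f 0) 1 ++ [f 1 + 1]) ((f 2 : ℝ) + 1) = 0) := by
  rw [sum_antidiagonalTuple_neg_one_pow_mul_xiL]
  constructor
  · intro hk
    simp only [if_pos hk, rz, recip, inv_pow, one_div]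
  · intro hk
    simp only [if_neg (Nat.not_even_iff_odd.mpr hk), tsum_zero]
end

section
/- For integers $r \geq 1$ and $k \geq 0$: $\sum_{k_1+\cdots+k_{r+1}=k} (-1)^{k_{r+1}}\, \xi(k_1+1,\ldots,k_r+1; k_{r+1}+1) = \sum_{a+2b=k} (-1)^a \binom{a+r-1}{r-1} \zeta^{\star}(a+r+1, \{2\}^b)$, where the left sum is over nonnegative integers $k_1,\ldots,k_{r+1}$ summing to $k$ and the right sum over nonnegative integers $a, b$ with $a+2b=k$. -/
open scoped BigOperators
open MeasureTheory

/-!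
Both sides are compared through their generating functions in `x`, for small `x > 0`. The star
values are collected by `P_n = ∏_{i > n} (1 - x² / i²)⁻¹ = ∑ ζ⋆_{> n}({2}ᵇ) x²ᵇ`, so that the right
side becomes `∑_n u(0, n) / (n + 1 + x) ^ r` with the connector
`u(m, n) = P_n * n! * ∏_{j < m} (j + 1 - x) / (m + n + 1)!`. The transport relation
`u(m, n) / (m - x) = (u(m - 1, n) - u(m, n)) / (n + 1 + x)` trades each factor `1 / (n + 1 + x)` for
a summation over `m` against `1 / (m - x) = ∑ x ^ q / m ^ (q + 1)`, which is one layer of a strict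
nested sum. After `r` steps there remains `∑_n u(m, n) = (m - 1)! / ∏_{j < m} (j + 1 + x)`, a Gauss
type summation whose value generates, up to sign, the moments of `(1 - e⁻ᵗ)ᵐ⁻¹ e⁻ᵗ` produced by the
integral defining `ξ`.
-/

open Filter Topology
open Finset.HasAntidiagonal (antidiagonal)

namespace ArakawaKaneko

section Series

lemma hasSum_sub_succ_of_antitone {f : ℕ → ℝ} {l : ℝ} (hf : Antitone f)
    (hl : Tendsto f atTop (𝓝 l)) : HasSum (fun n ↦ f n - f (n + 1)) (f 0 - l) := by
  rw [hasSum_iff_tendsto_nat_of_nonneg fun n ↦ sub_nonneg.2 (hf n.le_succ)]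
  simp_rw [Finset.sum_range_sub']
  exact tendsto_const_nhds.sub hl

lemma summable_and_tsum_le_of_le_sub_succ {f g : ℕ → ℝ} (hf : ∀ n, 0 ≤ f n) (hg : ∀ n, 0 ≤ g n)
    (h : ∀ n, f n ≤ g n - g (n + 1)) : Summable f ∧ ∑' n, f n ≤ g 0 := by
  have hpartial (n : ℕ) : ∑ i ∈ Finset.range n, f i ≤ g 0 := by
    refine (Finset.sum_le_sum fun i _ ↦ h i).trans ?_
    rw [Finset.sum_range_sub']
    linarith [hg n]
  exact ⟨summable_of_sum_range_le hf hpartial, Real.tsum_le_of_sum_range_le hf hpartial⟩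

lemma hasSum_exchange {α β : Type*} {f : α × β → ℝ} {g : α → ℝ} {h : β → ℝ} {s : ℝ}
    (hf : Summable f) (hrow : ∀ a, HasSum (fun b ↦ f (a, b)) (g a))
    (hcol : ∀ b, HasSum (fun a ↦ f (a, b)) (h b)) (hg : HasSum g s) : HasSum h s := by
  have hfs : HasSum f s := (hf.hasSum.prod_fiberwise hrow).unique hg ▸ hf.hasSum
  exact ((Equiv.prodComm β α).hasSum_iff.2 hfs).prod_fiberwise hcol

lemma hasSum_sum_fiber {α β : Type*} {f : α → ℝ} {s : ℝ} (hf : HasSum f s) (p : α → β)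
    (t : β → Finset α) (ht : ∀ a b, a ∈ t b ↔ p a = b) : HasSum (fun b ↦ ∑ a ∈ t b, f a) s := by
  refine ((Equiv.sigmaFiberEquiv p).hasSum_iff.2 hf).sigma fun b ↦ ?_
  let e : {a // p a = b} ≃ t b := Equiv.subtypeEquivRight fun a ↦ (ht a b).symm
  exact e.hasSum_iff.2 ((t b).hasSum f)

lemma eq_of_frequently_hasSum_pow {𝕜 : Type*} [NontriviallyNormedField 𝕜] [CompleteSpace 𝕜]
    {c d : ℕ → 𝕜} {f : 𝕜 → 𝕜} (h : ∃ᶠ x in 𝓝[≠] 0,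
      HasSum (fun k ↦ x ^ k * c k) (f x) ∧ HasSum (fun k ↦ x ^ k * d k) (f x)) : c = d := by
  let p := FormalMultilinearSeries.ofScalars 𝕜 (c - d)
  have hzero : ∃ᶠ x in 𝓝[≠] 0, HasSum (fun k ↦ (c - d) k * x ^ k) 0 :=
    h.mono fun x hx ↦ by simpa [mul_sub, mul_comm] using hx.1.sub hx.2
  have hradius : 0 < p.radius := by
    obtain ⟨x, hx, hx0⟩ := (hzero.and_eventually self_mem_nhdsWithin).exists
    refine lt_of_lt_of_le (by simpa using hx0) (p.le_radius_of_tendsto (r := ‖x‖₊) (l := 0) ?_)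
    simpa [p, FormalMultilinearSeries.ofScalars_norm] using hx.summable.tendsto_atTop_zero.norm
  have hp : HasFPowerSeriesAt p.sum p 0 := (p.hasFPowerSeriesOnBall hradius).hasFPowerSeriesAt
  have hsum : ∃ᶠ x in 𝓝[≠] 0, p.sum x = 0 := hzero.mono fun x hx ↦
    (FormalMultilinearSeries.ofScalars_sum_eq (c - d) x).trans hx.tsum_eq
  have hnhds : p.sum =ᶠ[𝓝 0] 0 := hp.analyticAt.frequently_zero_iff_eventually_zero.1 hsum
  have hp0 : p = 0 := (hp.congr hnhds).eq_zero
  exact sub_eq_zero.1 ((FormalMultilinearSeries.ofScalars_series_eq_zero 𝕜).1 hp0)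

lemma sum_antidiagonalTuple_succ {M : Type*} [AddCommMonoid M] (r k : ℕ)
    (F : (Fin (r + 1) → ℕ) → M) :
    ∑ f ∈ Finset.Nat.antidiagonalTuple (r + 1) k, F f =
      ∑ p ∈ antidiagonal k,
        ∑ f ∈ Finset.Nat.antidiagonalTuple r p.2, F (Fin.cons p.1 f) := by
  rw [Finset.sum_sigma']
  refine Finset.sum_bij' (fun f _ ↦ ⟨(f 0, ∑ i, Fin.tail f i), Fin.tail f⟩)
    (fun s _ ↦ Fin.cons s.1.1 s.2) ?_ ?_ (fun f _ ↦ Fin.cons_self_tail f) ?_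
    (fun f _ ↦ by rw [Fin.cons_self_tail])
  · simp [Finset.Nat.mem_antidiagonalTuple, Fin.sum_univ_succ, Fin.tail]
  · rintro ⟨⟨i, j⟩, g⟩ h
    simp_all [Finset.Nat.mem_antidiagonalTuple, Fin.sum_univ_succ]
  · rintro ⟨⟨i, j⟩, g⟩ h
    simp_all [Finset.Nat.mem_antidiagonalTuple]

end Series

section NestedSums

/-- The nested sum `∑ φ(mᵣ - 1 + d) / (m₁^k₁ ⋯ mᵣ^kᵣ)` over all `a < m₁`, `mᵢ + d ≤ mᵢ₊₁`, for the
index `[k₁, …, kᵣ]`, with value `φ a` when `r = 0`. Gap `d = 1` gives strict, `d = 0` gives star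
sums; the denominators are written as `a + i + 1`. -/
noncomputable def nestedSum (d : ℕ) (φ : ℕ → ℝ) : List ℕ → ℕ → ℝ
  | [], a => φ a
  | k :: l, a => ∑' i : ℕ, nestedSum d φ l (a + i + d) / (((a + i : ℕ) : ℝ) + 1) ^ k

/-- One layer of a nested sum with exponent `k` maps `g` to a convergent sum of size at most `2g`.
This is the induction hypothesis that makes nested sums converge. -/
def IsMajorant (d : ℕ) (g : ℕ → ℝ) (k : ℕ) : Prop :=
  ∀ a, Summable (fun i : ℕ ↦ g (a + i + d) / (((a + i : ℕ) : ℝ) + 1) ^ k) ∧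
    ∑' i : ℕ, g (a + i + d) / (((a + i : ℕ) : ℝ) + 1) ^ k ≤ 2 * g a

variable {d : ℕ} {φ g : ℕ → ℝ} {l : List ℕ}

lemma nestedSum_nonneg (hφ : ∀ n, 0 ≤ φ n) (l : List ℕ) (a : ℕ) : 0 ≤ nestedSum d φ l a := by
  induction l generalizing a with
  | nil => exact hφ a
  | cons k l ih => exact tsum_nonneg fun i ↦ div_nonneg (ih _) (by positivity)

lemma summable_div_pow_of_le {ψ : ℕ → ℝ} {k : ℕ} {C : ℝ} (hg : IsMajorant d g k)
    (hψ : ∀ n, 0 ≤ ψ n) (hle : ∀ n, ψ n ≤ C * g n) (a : ℕ) :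
    Summable (fun i : ℕ ↦ ψ (a + i + d) / (((a + i : ℕ) : ℝ) + 1) ^ k) := by
  refine ((hg a).1.mul_left C).of_nonneg_of_le (fun i ↦ div_nonneg (hψ _) (by positivity))
    fun i ↦ ?_
  rw [← mul_div_assoc]
  gcongr
  exact hle _

lemma tsum_div_pow_le {ψ : ℕ → ℝ} {k : ℕ} {C : ℝ} (hg : IsMajorant d g k) (hC : 0 ≤ C)
    (hψ : ∀ n, 0 ≤ ψ n) (hle : ∀ n, ψ n ≤ C * g n) (a : ℕ) :
    ∑' i : ℕ, ψ (a + i + d) / (((a + i : ℕ) : ℝ) + 1) ^ k ≤ 2 * C * g a := by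
  calc ∑' i : ℕ, ψ (a + i + d) / (((a + i : ℕ) : ℝ) + 1) ^ k
      ≤ ∑' i : ℕ, C * (g (a + i + d) / (((a + i : ℕ) : ℝ) + 1) ^ k) := by
        refine (summable_div_pow_of_le hg hψ hle a).tsum_le_tsum (fun i ↦ ?_)
          ((hg a).1.mul_left C)
        rw [← mul_div_assoc]
        gcongr
        exact hle _
    _ ≤ C * (2 * g a) := by
        rw [tsum_mul_left]
        exact mul_le_mul_of_nonneg_left (hg a).2 hC
    _ = 2 * C * g a := by ring

lemma nestedSum_le {C : ℝ} (hC : 0 ≤ C) (hφ : ∀ n, 0 ≤ φ n) (hle : ∀ n, φ n ≤ C * g n)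
    (hg : ∀ k ∈ l, IsMajorant d g k) (a : ℕ) : nestedSum d φ l a ≤ 2 ^ l.length * C * g a := by
  induction l generalizing a with
  | nil => simpa [nestedSum] using hle a
  | cons k l ih =>
    rw [List.forall_mem_cons] at hg
    refine (tsum_div_pow_le hg.1 (by positivity) (nestedSum_nonneg hφ l) (ih hg.2) a).trans_eq ?_
    rw [List.length_cons]
    ring

lemma summable_nestedSum {C : ℝ} {k : ℕ} (hC : 0 ≤ C) (hφ : ∀ n, 0 ≤ φ n)
    (hle : ∀ n, φ n ≤ C * g n) (hk : IsMajorant d g k) (hg : ∀ k ∈ l, IsMajorant d g k) (a : ℕ) :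
    Summable (fun i : ℕ ↦ nestedSum d φ l (a + i + d) / (((a + i : ℕ) : ℝ) + 1) ^ k) :=
  summable_div_pow_of_le hk (nestedSum_nonneg hφ l) (nestedSum_le hC hφ hle hg) a

/-- The tuples `a < f 0`, `f i + d ≤ f j` for `i < j`, over which a nested sum with gap `d` runs:
strictly increasing for `d = 1`, monotone for `d = 0`. -/
def GapChain (d a : ℕ) {r : ℕ} (f : Fin r → ℕ+) : Prop :=
  (∀ i, a < f i) ∧ ∀ i j, i < j → (f i : ℕ) + d ≤ f j

/-- The point at which a nested sum with gap `d` started at `a` evaluates its innermost function. -/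
def endpoint (d a : ℕ) {r : ℕ} (f : Fin r → ℕ+) : ℕ :=
  if h : 0 < r then (f ⟨r - 1, Nat.sub_lt h Nat.one_pos⟩).natPred + d else a

lemma gapChain_zero_iff_monotone {r : ℕ} {f : Fin r → ℕ+} : GapChain 0 0 f ↔ Monotone f := by
  simp [GapChain, monotone_iff_forall_lt]

lemma gapChain_one_iff_strictMono {r : ℕ} {f : Fin r → ℕ+} : GapChain 1 0 f ↔ StrictMono f := by
  simp [GapChain, StrictMono]

lemma gapChain_cons {r a i : ℕ} {f : Fin r → ℕ+} :
    GapChain d a (Fin.cons (a + i).succPNat f : Fin (r + 1) → ℕ+) ↔ GapChain d (a + i + d) f := by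
  have hfirst : (∀ j, a + i + 1 + d ≤ (f j : ℕ)) ↔ ∀ j, a + i + d < (f j : ℕ) :=
    forall_congr' fun j ↦ by omega
  simp only [GapChain, Fin.forall_fin_succ, Fin.cons_zero, Fin.cons_succ, Nat.succPNat_coe,
    Nat.succ_eq_add_one, Fin.succ_pos, forall_const, Fin.succ_lt_succ_iff, Fin.not_lt_zero,
    IsEmpty.forall_iff, true_and, hfirst]
  exact ⟨fun h ↦ ⟨h.2.1, h.2.2⟩, fun h ↦ ⟨⟨by omega, fun j ↦ by have := h.1 j; omega⟩, h⟩⟩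

lemma endpoint_cons {r a i : ℕ} (f : Fin r → ℕ+) :
    endpoint d a (Fin.cons (a + i).succPNat f : Fin (r + 1) → ℕ+) = endpoint d (a + i + d) f := by
  rcases r with _ | r
  · simp [endpoint]
  · have hlast : (⟨r + 1, by omega⟩ : Fin (r + 2)) = Fin.succ ⟨r, by omega⟩ := rfl
    simp only [endpoint, Nat.add_sub_cancel, hlast, Fin.cons_succ, Nat.succ_pos, dite_true]

lemma bijective_gapChain_cons {r a : ℕ} : Function.Bijective
    fun s : (i : ℕ) × {f : Fin r → ℕ+ // GapChain d (a + i + d) f} ↦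
      (⟨Fin.cons (a + s.1).succPNat s.2.1, gapChain_cons.2 s.2.2⟩ :
        {f : Fin (r + 1) → ℕ+ // GapChain d a f}) := by
  refine ⟨?_, ?_⟩
  · rintro ⟨i, f, hf⟩ ⟨j, f', hf'⟩ h
    rw [Subtype.mk.injEq, Fin.cons_inj] at h
    obtain ⟨h0, rfl⟩ := h
    obtain rfl : i = j := by simpa using h0
    rfl
  · rintro ⟨f, hf⟩
    have h0 : (a + (f 0 - a - 1)).succPNat = f 0 := by
      have := hf.1 0
      apply PNat.eq
      rw [Nat.succPNat_coe]
      omega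
    have hcons : Fin.cons (a + (f 0 - a - 1)).succPNat (Fin.tail f) = f := by
      rw [h0, Fin.cons_self_tail]
    exact ⟨⟨f 0 - a - 1, Fin.tail f, gapChain_cons.1 (hcons.symm ▸ hf)⟩, Subtype.ext hcons⟩

lemma prod_cons_mul_endpoint (k a i : ℕ) (f : Fin l.length → ℕ+) :
    (∏ j, (1 : ℝ) / (((Fin.cons (a + i).succPNat f : Fin (l.length + 1) → ℕ+) j : ℕ) : ℝ) ^
        (k :: l).get j) *
        φ (endpoint d a (Fin.cons (a + i).succPNat f : Fin (l.length + 1) → ℕ+)) =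
      (∏ j, (1 : ℝ) / ((f j : ℕ) : ℝ) ^ l.get j) * φ (endpoint d (a + i + d) f) /
        (((a + i : ℕ) : ℝ) + 1) ^ k := by
  rw [endpoint_cons, Fin.prod_univ_succ]
  simp only [Fin.cons_zero, Fin.cons_succ, List.get_cons_zero, List.get_cons_succ',
    Nat.succPNat_coe, Nat.succ_eq_add_one, Nat.cast_add, Nat.cast_one]
  ring

lemma hasSum_nestedSum {C : ℝ} (hC : 0 ≤ C) (hφ : ∀ n, 0 ≤ φ n) (hle : ∀ n, φ n ≤ C * g n)
    (hg : ∀ k ∈ l, IsMajorant d g k) (a : ℕ) :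
    HasSum (fun f : {f : Fin l.length → ℕ+ // GapChain d a f} ↦
      (∏ i, (1 : ℝ) / ((f.1 i : ℕ) : ℝ) ^ l.get i) * φ (endpoint d a f.1)) (nestedSum d φ l a) := by
  induction l generalizing a with
  | nil =>
    let _ : Unique {f : Fin ([] : List ℕ).length → ℕ+ // GapChain d a f} :=
      ⟨⟨⟨Fin.elim0, by simp [GapChain]⟩⟩, fun f ↦ Subtype.ext (funext fun i ↦ i.elim0)⟩
    simp [nestedSum, endpoint]
  | cons k l ih =>
    rw [List.forall_mem_cons] at hg
    have hinner (i : ℕ) := (ih hg.2 (a + i + d)).div_const ((((a + i : ℕ) : ℝ) + 1) ^ k)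
    have houter := (summable_nestedSum hC hφ hle hg.1 hg.2 a).hasSum
    refine (Equiv.ofBijective _ (bijective_gapChain_cons (r := l.length))).hasSum_iff.1 ?_
    refine HasSum.congr_fun (g := _) ?_ (fun s ↦ prod_cons_mul_endpoint k a s.1 s.2.1)
    refine houter.sigma_of_hasSum hinner ((summable_sigma_of_nonneg fun s ↦ ?_).2 ⟨?_, ?_⟩)
    · have := hφ (endpoint d (a + s.1 + d) s.2.1)
      positivity
    · exact fun i ↦ (hinner i).summable
    · exact houter.summable.congr fun i ↦ (hinner i).tsum_eq.symm

end NestedSums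

section Star

lemma one_div_sq_le_sub (m : ℕ) :
    1 / ((m : ℝ) + 1) ^ 2 ≤ 2 / ((m : ℝ) + 1) - 2 / ((m : ℝ) + 1 + 1) := by
  have h : 2 / ((m : ℝ) + 1) - 2 / ((m : ℝ) + 1 + 1) - 1 / ((m : ℝ) + 1) ^ 2 =
      m / (((m : ℝ) + 1) ^ 2 * (m + 1 + 1)) := by
    field_simp
    ring
  have : (0 : ℝ) ≤ m / (((m : ℝ) + 1) ^ 2 * (m + 1 + 1)) := by positivity
  linarith

lemma isMajorant_one {k : ℕ} (hk : 2 ≤ k) : IsMajorant 0 1 k := by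
  intro a
  refine (summable_and_tsum_le_of_le_sub_succ (g := fun i ↦ 2 / (((a + i : ℕ) : ℝ) + 1))
    (fun i ↦ ?_) (fun i ↦ by positivity) (fun i ↦ ?_)).imp_right fun h ↦ h.trans ?_
  · rw [Pi.one_apply]
    positivity
  · have hpow : (((a + i : ℕ) : ℝ) + 1) ^ 2 ≤ (((a + i : ℕ) : ℝ) + 1) ^ k :=
      pow_le_pow_right₀ (le_add_of_nonneg_left (Nat.cast_nonneg _)) hk
    refine (one_div_le_one_div_of_le (by positivity) hpow).trans ?_
    simpa [add_assoc] using one_div_sq_le_sub (a + i)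
  · rw [Pi.one_apply, mul_one]
    exact div_le_self zero_le_two (le_add_of_nonneg_left (Nat.cast_nonneg _))

/-- The tail `∑ 1 / (m₁² ⋯ m_b²)` over `n < m₁ ≤ ⋯ ≤ m_b`. -/
noncomputable def tailStar (b n : ℕ) : ℝ := nestedSum 0 1 (List.replicate b 2) n

lemma tailStar_nonneg (b n : ℕ) : 0 ≤ tailStar b n := nestedSum_nonneg (fun _ ↦ zero_le_one) _ n

lemma tailStar_zero (n : ℕ) : tailStar 0 n = 1 := rfl

lemma tailStar_le (b n : ℕ) : tailStar b n ≤ 2 ^ b := by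
  have h := nestedSum_le (d := 0) (φ := 1) (l := List.replicate b 2) zero_le_one
    (fun _ ↦ zero_le_one) (fun _ ↦ (one_mul _).ge)
    (fun k hk ↦ isMajorant_one (List.eq_of_mem_replicate hk).ge) n
  exact h.trans_eq (by simp)

lemma tailStar_succ (b n : ℕ) :
    tailStar (b + 1) n = ∑' i : ℕ, tailStar b (n + i) / (((n + i : ℕ) : ℝ) + 1) ^ 2 := rfl

lemma summable_tailStar_div {s : ℕ} (hs : 2 ≤ s) (b n : ℕ) :
    Summable (fun i : ℕ ↦ tailStar b (n + i) / (((n + i : ℕ) : ℝ) + 1) ^ s) :=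
  summable_div_pow_of_le (isMajorant_one hs) (tailStar_nonneg b)
    (fun m ↦ by simpa using tailStar_le b m) n

lemma tailStar_succ_eq_add (b n : ℕ) :
    tailStar (b + 1) n = tailStar (b + 1) (n + 1) + tailStar b n / ((n : ℝ) + 1) ^ 2 := by
  rw [tailStar_succ, (summable_tailStar_div le_rfl b n).tsum_eq_zero_add, tailStar_succ, add_comm]
  simp only [add_zero, add_assoc, add_comm 1]

lemma tendsto_tailStar_succ (b : ℕ) : Tendsto (tailStar (b + 1)) atTop (𝓝 0) := by
  refine (tendsto_sum_nat_add fun i ↦ tailStar b i / ((i : ℝ) + 1) ^ 2).congr fun n ↦ ?_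
  simp only [tailStar_succ, add_comm n]

lemma zetaStarL_eq_nestedSum {l : List ℕ} (hl : ∀ k ∈ l, 2 ≤ k) :
    zetaStarL l = nestedSum 0 1 l 0 := by
  have h := hasSum_nestedSum (d := 0) (φ := 1) zero_le_one
    (fun _ ↦ zero_le_one) (fun _ ↦ (one_mul _).ge) (fun k hk ↦ isMajorant_one (hl k hk)) 0
  have hiff (f : Fin l.length → ℕ+) : Monotone f ↔ GapChain 0 0 f := gapChain_zero_iff_monotone.symm
  rw [zetaStarL, ← h.tsum_eq, ← (Equiv.subtypeEquivRight hiff).tsum_eq]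
  simp

lemma zetaStarL_eq_tsum {s : ℕ} (hs : 2 ≤ s) (b : ℕ) :
    zetaStarL ([s] ++ List.replicate b 2) = ∑' n : ℕ, tailStar b n / ((n : ℝ) + 1) ^ s := by
  rw [List.singleton_append, zetaStarL_eq_nestedSum]
  · simp [nestedSum, tailStar]
  · simp only [List.forall_mem_cons, List.mem_replicate, ne_eq, and_imp]
    exact ⟨hs, fun k _ hk ↦ hk.ge⟩

/-- The generating function `∑ x^(2b) ζ⋆_{>n}({2}^b)` of the star tails, i.e. the product
`∏ (1 - x² / i²)⁻¹` over `i > n`. -/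
noncomputable def starGen (x : ℝ) (n : ℕ) : ℝ := ∑' b, x ^ (2 * b) * tailStar b n

variable {x : ℝ}

lemma pow_mul_tailStar_nonneg (x : ℝ) (b n : ℕ) : 0 ≤ x ^ (2 * b) * tailStar b n :=
  mul_nonneg ((even_two_mul b).pow_nonneg x) (tailStar_nonneg b n)

lemma pow_mul_tailStar_le (x : ℝ) (b n : ℕ) : x ^ (2 * b) * tailStar b n ≤ (2 * x ^ 2) ^ b := by
  rw [mul_pow, ← pow_mul, mul_comm]
  exact mul_le_mul_of_nonneg_right (tailStar_le b n) ((even_two_mul b).pow_nonneg x)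

lemma hasSum_starGen (hx : 2 * x ^ 2 < 1) (n : ℕ) :
    HasSum (fun b ↦ x ^ (2 * b) * tailStar b n) (starGen x n) :=
  ((summable_geometric_of_lt_one (by positivity) hx).of_nonneg_of_le
    (fun b ↦ pow_mul_tailStar_nonneg x b n) (fun b ↦ pow_mul_tailStar_le x b n)).hasSum

lemma one_le_starGen (hx : 2 * x ^ 2 < 1) (n : ℕ) : 1 ≤ starGen x n := by
  simpa [tailStar_zero] using
    le_hasSum (hasSum_starGen hx n) 0 fun b _ ↦ pow_mul_tailStar_nonneg x b n

lemma starGen_eq_add (hx : 2 * x ^ 2 < 1) (n : ℕ) :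
    starGen x n = starGen x (n + 1) + x ^ 2 / ((n : ℝ) + 1) ^ 2 * starGen x n := by
  have hn := (hasSum_nat_add_iff' 1).2 (hasSum_starGen hx n)
  have hstep := ((hasSum_nat_add_iff' 1).2 (hasSum_starGen hx (n + 1))).add
    ((hasSum_starGen hx n).mul_left (x ^ 2 / ((n : ℝ) + 1) ^ 2))
  have heq := hn.unique (hstep.congr_fun fun b ↦ by rw [tailStar_succ_eq_add]; ring)
  simp only [Finset.sum_range_one, tailStar_zero] at heq
  linarith

lemma starGen_mul_sub (hx : 2 * x ^ 2 < 1) (n : ℕ) :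
    starGen x n * (((n : ℝ) + 1) ^ 2 - x ^ 2) = starGen x (n + 1) * ((n : ℝ) + 1) ^ 2 := by
  have h := starGen_eq_add hx n
  field_simp at h
  linarith

lemma antitone_starGen (hx : 2 * x ^ 2 < 1) : Antitone (starGen x) := by
  refine antitone_nat_of_succ_le fun n ↦ ?_
  have := one_le_starGen hx n
  rw [starGen_eq_add hx n]
  exact le_add_of_nonneg_right (by positivity)

lemma tendsto_starGen (hx : 2 * x ^ 2 < 1) : Tendsto (starGen x) atTop (𝓝 1) := by
  have hlim : ∑' b : ℕ, (if b = 0 then (1 : ℝ) else 0) = 1 := tsum_ite_eq 0 fun _ ↦ 1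
  rw [← hlim]
  refine tendsto_tsum_of_dominated_convergence
    (summable_geometric_of_lt_one (by positivity) hx) (fun b ↦ ?_) (.of_forall fun n b ↦ ?_)
  · rcases b with _ | b
    · simp [tailStar_zero]
    · simpa using (tendsto_tailStar_succ b).const_mul (x ^ (2 * (b + 1)))
  · rw [Real.norm_of_nonneg (pow_mul_tailStar_nonneg x b n)]
    exact pow_mul_tailStar_le x b n

end Star

section Connector

/-- The connector of the connected sum; it lets the index of the multiple zeta side (`m`) and that
of the star side (`n`) interact through exactly telescoping transport relations. -/
noncomputable def connector (x : ℝ) (m n : ℕ) : ℝ :=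
  starGen x n * n.factorial * (∏ j ∈ Finset.range m, ((j : ℝ) + 1 - x)) / (m + n + 1).factorial

variable {x : ℝ}

lemma lt_one_of_two_mul_sq_lt_one (hx : 2 * x ^ 2 < 1) : x < 1 := by nlinarith

lemma connector_zero_left (x : ℝ) (n : ℕ) : connector x 0 n = starGen x n / (n + 1) := by
  rw [connector, zero_add, Nat.factorial_succ]
  have := n.factorial_ne_zero
  push_cast
  simp only [Finset.range_zero, Finset.prod_empty]
  field_simp

lemma connector_succ_left (x : ℝ) (m n : ℕ) :
    connector x (m + 1) n = connector x m n * (m + 1 - x) / (m + n + 2) := by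
  rw [connector, connector, Finset.prod_range_succ, show m + 1 + n + 1 = m + n + 1 + 1 by ring,
    Nat.factorial_succ (m + n + 1)]
  have := (m + n + 1).factorial_ne_zero
  push_cast
  field_simp
  ring

lemma connector_succ_right (hx : 2 * x ^ 2 < 1) (m n : ℕ) :
    (n + 1) * connector x m (n + 1) =
      connector x m n * (((n : ℝ) + 1) ^ 2 - x ^ 2) / (m + n + 2) := by
  rw [connector, connector, ← add_assoc m n 1, Nat.factorial_succ (m + n + 1),
    Nat.factorial_succ n]
  have := (m + n + 1).factorial_ne_zero
  push_cast
  field_simp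
  linear_combination
    -(m + n + 2) * (∏ j ∈ Finset.range m, ((j : ℝ) + 1 - x)) * starGen_mul_sub hx n

lemma connector_nonneg (hx : 2 * x ^ 2 < 1) (m n : ℕ) : 0 ≤ connector x m n := by
  have hP := one_le_starGen hx n
  have hprod : 0 ≤ ∏ j ∈ Finset.range m, ((j : ℝ) + 1 - x) := Finset.prod_nonneg fun j _ ↦ by
    linarith [lt_one_of_two_mul_sq_lt_one hx, j.cast_nonneg (α := ℝ)]
  unfold connector
  positivity

lemma mul_connector_succ_le (hx0 : 0 ≤ x) (hx : 2 * x ^ 2 < 1) (m n : ℕ) :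
    (m + n + 2) * connector x (m + 1) n ≤ (m + 1) * connector x m n := by
  have h := connector_nonneg hx m n
  rw [connector_succ_left, mul_div_cancel₀ _ (by positivity), mul_comm]
  gcongr
  linarith

lemma succ_mul_connector_le (hx0 : 0 ≤ x) (hx : 2 * x ^ 2 < 1) (m n : ℕ) :
    (m + 1) * connector x m n ≤ connector x 0 n := by
  induction m with
  | zero => simp
  | succ m ih =>
    refine le_trans ?_ ((mul_connector_succ_le hx0 hx m n).trans ih)
    refine mul_le_mul_of_nonneg_right ?_ (connector_nonneg hx (m + 1) n)
    push_cast
    linarith [n.cast_nonneg (α := ℝ)]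

lemma connector_le (hx0 : 0 ≤ x) (hx : 2 * x ^ 2 < 1) (m n : ℕ) :
    connector x m n ≤ starGen x 0 / ((m + 1) * (n + 1)) := by
  rw [mul_comm, ← div_div, le_div_iff₀' (by positivity)]
  refine (succ_mul_connector_le hx0 hx m n).trans ?_
  rw [connector_zero_left]
  gcongr
  exact antitone_starGen hx n.zero_le

lemma tendsto_connector_left (hx0 : 0 ≤ x) (hx : 2 * x ^ 2 < 1) (n : ℕ) :
    Tendsto (fun m ↦ connector x m n) atTop (𝓝 0) := by
  refine squeeze_zero (fun m ↦ connector_nonneg hx m n) (fun m ↦ connector_le hx0 hx m n) ?_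
  simp only [← div_div, div_right_comm _ _ ((n : ℝ) + 1)]
  exact (tendsto_const_nhds.div_atTop
    (tendsto_atTop_add_const_right _ 1 tendsto_natCast_atTop_atTop))

lemma tendsto_connector_right (hx0 : 0 ≤ x) (hx : 2 * x ^ 2 < 1) (m : ℕ) :
    Tendsto (connector x m) atTop (𝓝 0) := by
  refine squeeze_zero (connector_nonneg hx m) (connector_le hx0 hx m) ?_
  simp only [← div_div]
  exact tendsto_const_nhds.div_atTop
    (tendsto_atTop_add_const_right _ 1 tendsto_natCast_atTop_atTop)

lemma connector_succ_div (hx0 : 0 ≤ x) (hx : 2 * x ^ 2 < 1) (m n : ℕ) :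
    connector x (m + 1) n / (m + 1 - x) =
      connector x m n / (n + 1 + x) - connector x (m + 1) n / (n + 1 + x) := by
  have := lt_one_of_two_mul_sq_lt_one hx
  have h : (0 : ℝ) < m + 1 - x := by linarith [m.cast_nonneg (α := ℝ)]
  rw [connector_succ_left]
  field_simp
  ring

lemma hasSum_connector_div (hx0 : 0 ≤ x) (hx : 2 * x ^ 2 < 1) (a n : ℕ) :
    HasSum (fun i : ℕ ↦ connector x (a + i + 1) n / ((a + i : ℕ) + 1 - x))
      (connector x a n / (n + 1 + x)) := by
  have hpos (m : ℕ) : (0 : ℝ) < m + 1 - x := by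
    linarith [m.cast_nonneg (α := ℝ), lt_one_of_two_mul_sq_lt_one hx]
  have hanti : Antitone fun i : ℕ ↦ connector x (a + i) n / (n + 1 + x) :=
    antitone_nat_of_succ_le fun i ↦ sub_nonneg.1 <| by
      rw [← add_assoc, ← connector_succ_div hx0 hx]
      exact div_nonneg (connector_nonneg hx _ n) (hpos _).le
  have hlim : Tendsto (fun i : ℕ ↦ connector x (a + i) n / (n + 1 + x)) atTop (𝓝 0) := by
    simpa [add_comm a] using ((tendsto_connector_left hx0 hx n).comp
      (tendsto_add_atTop_nat a)).div_const (n + 1 + x)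
  simpa [← add_assoc, ← connector_succ_div hx0 hx] using hasSum_sub_succ_of_antitone hanti hlim

lemma connector_exchange (hx : 2 * x ^ 2 < 1) (m n : ℕ) :
    (m + 1 + x) * connector x (m + 1) n =
      m * connector x m n + ((n + 1) * connector x m (n + 1) - n * connector x m n) := by
  rw [connector_succ_right hx, connector_succ_left]
  field_simp
  ring

lemma sum_range_connector_succ (hx : 2 * x ^ 2 < 1) (m N : ℕ) :
    (m + 1 + x) * ∑ n ∈ Finset.range N, connector x (m + 1) n =
      m * ∑ n ∈ Finset.range N, connector x m n + N * connector x m N := by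
  have htele := Finset.sum_range_sub (fun n : ℕ ↦ (n : ℝ) * connector x m n) N
  push_cast at htele
  simp only [zero_mul, sub_zero] at htele
  rw [Finset.mul_sum, Finset.mul_sum, ← htele, ← Finset.sum_add_distrib]
  exact Finset.sum_congr rfl fun n _ ↦ connector_exchange hx m n

lemma tendsto_mul_connector_zero (hx : 2 * x ^ 2 < 1) :
    Tendsto (fun n : ℕ ↦ n * connector x 0 n) atTop (𝓝 1) := by
  have h := (tendsto_natCast_div_add_atTop (1 : ℝ)).mul (tendsto_starGen hx)
  rw [one_mul] at h
  exact h.congr fun n ↦ by rw [connector_zero_left]; ring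

lemma tendsto_mul_connector_succ (hx0 : 0 ≤ x) (hx : 2 * x ^ 2 < 1) (m : ℕ) :
    Tendsto (fun n : ℕ ↦ n * connector x (m + 1) n) atTop (𝓝 0) := by
  have h := (tendsto_connector_right hx0 hx m).const_mul ((m : ℝ) + 1)
  rw [mul_zero] at h
  refine squeeze_zero (fun n ↦ mul_nonneg n.cast_nonneg (connector_nonneg hx _ n)) (fun n ↦ ?_) h
  refine le_trans ?_ (mul_connector_succ_le hx0 hx m n)
  have := connector_nonneg hx (m + 1) n
  gcongr
  linarith [m.cast_nonneg (α := ℝ)]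

lemma hasSum_connector (hx0 : 0 ≤ x) (hx : 2 * x ^ 2 < 1) (m : ℕ) :
    HasSum (connector x (m + 1))
      (m.factorial / ∏ j ∈ Finset.range (m + 1), ((j : ℝ) + 1 + x)) := by
  have hstep (m : ℕ) (l : ℝ) (hl : Tendsto (fun N : ℕ ↦ m * ∑ n ∈ Finset.range N, connector x m n +
      N * connector x m N) atTop (𝓝 l)) : HasSum (connector x (m + 1)) (l / (m + 1 + x)) := by
    rw [hasSum_iff_tendsto_nat_of_nonneg (connector_nonneg hx _)]
    refine (hl.div_const _).congr fun N ↦ ?_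
    rw [← sum_range_connector_succ hx, mul_div_cancel_left₀ _ (by positivity)]
  induction m with
  | zero => simpa using hstep 0 1 (by simpa using tendsto_mul_connector_zero hx)
  | succ m ih =>
    convert! hstep (m + 1) _ ((ih.tendsto_sum_nat.const_mul _).add
      (tendsto_mul_connector_succ hx0 hx m)) using 1
    rw [Finset.prod_range_succ _ (m + 1), Nat.factorial_succ, add_zero, Nat.cast_mul,
      ← mul_div_assoc, div_div]

end Connector

section BetaMoments

/-- The integrand of `betaMoment`. -/
noncomputable def betaKernel (j m : ℕ) (t : ℝ) : ℝ :=
  t ^ j * Real.exp (-t) * (1 - Real.exp (-t)) ^ m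

/-- The moment `(1/j!) ∫ tʲ e⁻ᵗ (1 - e⁻ᵗ)^(m - 1) dt` over `t > 0`, which is what the integral in
`xiL` makes of a term of `LiL` with largest summation index `m`. The value at `m = 0`, where the
subtraction truncates, is the one at `m = 1`. -/
noncomputable def betaMoment (j m : ℕ) : ℝ :=
  (∫ t in Set.Ioi 0, betaKernel j (m - 1) t) / j.factorial

lemma one_sub_exp_neg_nonneg {t : ℝ} (ht : 0 < t) : 0 ≤ 1 - Real.exp (-t) :=
  sub_nonneg.2 (Real.exp_le_one_iff.2 (by linarith))

lemma betaKernel_nonneg (j m : ℕ) {t : ℝ} (ht : 0 < t) : 0 ≤ betaKernel j m t := by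
  have := one_sub_exp_neg_nonneg ht
  unfold betaKernel
  positivity

lemma betaKernel_le (j m : ℕ) {t : ℝ} (ht : 0 < t) : betaKernel j m t ≤ t ^ j * Real.exp (-t) :=
  mul_le_of_le_one_right (by positivity)
    (pow_le_one₀ (one_sub_exp_neg_nonneg ht) (sub_le_self 1 (Real.exp_pos _).le))

lemma continuous_betaKernel (j m : ℕ) : Continuous (betaKernel j m) := by
  unfold betaKernel
  fun_prop

lemma integrableOn_betaKernel (j m : ℕ) : IntegrableOn (betaKernel j m) (Set.Ioi 0) := by
  have hGamma := Real.GammaIntegral_convergent (s := (j : ℝ) + 1) (by positivity)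
  refine hGamma.mono' (continuous_betaKernel j m).aestronglyMeasurable ?_
  refine (ae_restrict_iff' measurableSet_Ioi).2 (.of_forall fun t ht ↦ ?_)
  rw [Real.norm_of_nonneg (betaKernel_nonneg j m ht), add_sub_cancel_right, Real.rpow_natCast,
    mul_comm]
  exact betaKernel_le j m ht

lemma tendsto_betaKernel (j m : ℕ) : Tendsto (betaKernel j m) atTop (𝓝 0) := by
  refine squeeze_zero' ?_ ?_ (Real.tendsto_pow_mul_exp_neg_atTop_nhds_zero j)
  · filter_upwards [eventually_gt_atTop 0] with t ht using betaKernel_nonneg j m ht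
  · filter_upwards [eventually_gt_atTop 0] with t ht using betaKernel_le j m ht

lemma hasDerivAt_exp_neg (t : ℝ) : HasDerivAt (fun t ↦ Real.exp (-t)) (-Real.exp (-t)) t := by
  simpa using (hasDerivAt_id t).neg.exp

lemma hasDerivAt_one_sub_exp_neg (t : ℝ) :
    HasDerivAt (fun t ↦ 1 - Real.exp (-t)) (Real.exp (-t)) t := by
  simpa using (hasDerivAt_exp_neg t).const_sub 1

lemma integral_betaKernel_zero (m : ℕ) :
    ∫ t in Set.Ioi 0, betaKernel 0 m t = 1 / ((m : ℝ) + 1) := by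
  have hderiv (t : ℝ) (_ : t ∈ Set.Ici 0) : HasDerivAt
      (fun t ↦ (1 - Real.exp (-t)) ^ (m + 1) / ((m : ℝ) + 1)) (betaKernel 0 m t) t := by
    convert! ((hasDerivAt_one_sub_exp_neg t).pow (m + 1)).div_const ((m : ℝ) + 1) using 1
    unfold betaKernel
    push_cast
    field_simp
  have hlim : Tendsto (fun t ↦ (1 - Real.exp (-t)) ^ (m + 1) / ((m : ℝ) + 1)) atTop
      (𝓝 ((1 - 0) ^ (m + 1) / ((m : ℝ) + 1))) :=
    ((Real.tendsto_exp_neg_atTop_nhds_zero.const_sub 1).pow _).div_const _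
  rw [integral_Ioi_of_hasDerivAt_of_tendsto' hderiv (integrableOn_betaKernel 0 m) hlim]
  simp

lemma hasDerivAt_betaKernel_succ (j m : ℕ) (t : ℝ) :
    HasDerivAt (betaKernel (j + 1) m) (m * betaKernel (j + 1) (m - 1) t +
      (j + 1) * betaKernel j m t - (m + 1) * betaKernel (j + 1) m t) t := by
  convert! ((hasDerivAt_pow (j + 1) t).mul (hasDerivAt_exp_neg t)).mul
    ((hasDerivAt_one_sub_exp_neg t).pow m) using 1
  unfold betaKernel
  rcases m with _ | m
  · simp only [Pi.mul_apply, Pi.one_apply, Nat.cast_zero, Nat.cast_add, Nat.cast_one,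
      Nat.add_sub_cancel, pow_zero, zero_mul, mul_zero]
    ring
  · simp only [Pi.mul_apply, Pi.pow_apply, Nat.add_sub_cancel]
    push_cast
    ring

lemma integral_betaKernel_succ (j m : ℕ) :
    (m + 1) * ∫ t in Set.Ioi 0, betaKernel (j + 1) m t =
      m * (∫ t in Set.Ioi 0, betaKernel (j + 1) (m - 1) t) +
        (j + 1) * ∫ t in Set.Ioi 0, betaKernel j m t := by
  have h₁ := (integrableOn_betaKernel (j + 1) (m - 1)).const_mul (m : ℝ)
  have h₂ := (integrableOn_betaKernel j m).const_mul ((j : ℝ) + 1)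
  have h₃ := (integrableOn_betaKernel (j + 1) m).const_mul ((m : ℝ) + 1)
  have h₁₂ : IntegrableOn
      (fun t ↦ m * betaKernel (j + 1) (m - 1) t + (j + 1) * betaKernel j m t) (Set.Ioi 0) :=
    h₁.add h₂
  have h := integral_Ioi_of_hasDerivAt_of_tendsto' (fun t _ ↦ hasDerivAt_betaKernel_succ j m t)
    (h₁₂.sub h₃) (tendsto_betaKernel (j + 1) m)
  have hzero : betaKernel (j + 1) m 0 = 0 := by simp [betaKernel]
  rw [integral_sub h₁₂ h₃, integral_add h₁ h₂, integral_const_mul, integral_const_mul,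
    integral_const_mul, hzero] at h
  linarith

lemma betaMoment_nonneg (j m : ℕ) : 0 ≤ betaMoment j m :=
  div_nonneg (setIntegral_nonneg measurableSet_Ioi fun _ ht ↦ betaKernel_nonneg j _ ht)
    (Nat.cast_nonneg _)

lemma betaMoment_zero_succ (m : ℕ) : betaMoment 0 (m + 1) = 1 / ((m : ℝ) + 1) := by
  simp [betaMoment, integral_betaKernel_zero]

lemma betaMoment_succ_succ (j m : ℕ) :
    (m + 1) * betaMoment (j + 1) (m + 1) = m * betaMoment (j + 1) m + betaMoment j (m + 1) := by
  have h := integral_betaKernel_succ j m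
  simp only [betaMoment, Nat.add_sub_cancel, Nat.factorial_succ]
  push_cast
  field_simp
  linarith

lemma betaMoment_zero_right (j : ℕ) : betaMoment j 0 = 1 := by
  change betaMoment j (0 + 1) = 1
  induction j with
  | zero => simp [betaMoment_zero_succ]
  | succ j ih => simpa [ih] using betaMoment_succ_succ j 0

/-- The product `∏ (i + 1) / (i + 3/2)` over `i < m`. Being of order `m ^ (-1/2)`, it decays slowly
enough to dominate every `betaMoment j`, and fast enough to majorize strict nested sums. -/
noncomputable def sqrtMajorant (m : ℕ) : ℝ := ∏ i ∈ Finset.range m, ((i : ℝ) + 1) / (i + 3 / 2)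

lemma sqrtMajorant_pos (m : ℕ) : 0 < sqrtMajorant m := Finset.prod_pos fun _ _ ↦ by positivity

lemma sqrtMajorant_succ (m : ℕ) :
    (m + 3 / 2) * sqrtMajorant (m + 1) = (m + 1) * sqrtMajorant m := by
  rw [sqrtMajorant, Finset.prod_range_succ, ← sqrtMajorant]
  field_simp

lemma sqrtMajorant_succ_div (m : ℕ) :
    sqrtMajorant (m + 1) / (m + 1) = 2 * sqrtMajorant m - 2 * sqrtMajorant (m + 1) := by
  field_simp
  linarith [sqrtMajorant_succ m]

lemma one_div_le_sqrtMajorant (m : ℕ) : 1 / ((m : ℝ) + 1) ≤ sqrtMajorant m := by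
  induction m with
  | zero => simp [sqrtMajorant]
  | succ m ih =>
    rw [div_le_iff₀ (by positivity)] at ih ⊢
    have := sqrtMajorant_pos (m + 1)
    push_cast
    nlinarith [sqrtMajorant_succ m]

lemma mul_sqrtMajorant_le (m : ℕ) : m * sqrtMajorant m ≤ (m + 1 / 2) * sqrtMajorant (m + 1) := by
  refine le_of_mul_le_mul_left ?_ (by positivity : (0 : ℝ) < m + 1)
  have hsucc := congrArg ((m : ℝ) * ·) (sqrtMajorant_succ m)
  linarith [sqrtMajorant_pos (m + 1)]

lemma isMajorant_sqrtMajorant {k : ℕ} (hk : 1 ≤ k) : IsMajorant 1 sqrtMajorant k := by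
  intro a
  refine summable_and_tsum_le_of_le_sub_succ (g := fun i ↦ 2 * sqrtMajorant (a + i))
    (fun i ↦ div_nonneg (sqrtMajorant_pos _).le (by positivity))
    (fun i ↦ mul_nonneg zero_le_two (sqrtMajorant_pos _).le) (fun i ↦ ?_)
  rw [← add_assoc, ← sqrtMajorant_succ_div]
  have hpos := sqrtMajorant_pos (a + i + 1)
  have hpow : ((a + i : ℕ) : ℝ) + 1 ≤ (((a + i : ℕ) : ℝ) + 1) ^ k :=
    le_self_pow₀ (le_add_of_nonneg_left (Nat.cast_nonneg _)) (by omega)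
  gcongr

lemma betaMoment_le (j m : ℕ) : betaMoment j m ≤ 2 ^ (j + 1) * sqrtMajorant m := by
  induction j generalizing m with
  | zero =>
    rcases m with _ | m
    · norm_num [betaMoment_zero_right, sqrtMajorant]
    · rw [betaMoment_zero_succ]
      have h := one_div_le_sqrtMajorant (m + 1)
      rw [div_le_iff₀ (by positivity)] at h ⊢
      have hpos : 0 ≤ m * sqrtMajorant (m + 1) := mul_nonneg m.cast_nonneg (sqrtMajorant_pos _).le
      push_cast at h
      rw [zero_add, pow_one]
      linarith
  | succ j ihj =>
    induction m with
    | zero =>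
      simpa [betaMoment_zero_right, sqrtMajorant] using one_le_pow₀ (one_le_two (α := ℝ))
    | succ m ihm =>
      refine le_of_mul_le_mul_left ?_ (by positivity : (0 : ℝ) < m + 1)
      calc (m + 1) * betaMoment (j + 1) (m + 1)
          = m * betaMoment (j + 1) m + betaMoment j (m + 1) := betaMoment_succ_succ j m
        _ ≤ m * (2 ^ (j + 2) * sqrtMajorant m) + 2 ^ (j + 1) * sqrtMajorant (m + 1) := by
          gcongr
          exact ihj _
        _ ≤ (m + 1) * (2 ^ (j + 2) * sqrtMajorant (m + 1)) := by
          have h := mul_le_mul_of_nonneg_left (mul_sqrtMajorant_le m)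
            (by positivity : (0 : ℝ) ≤ 2 ^ (j + 2))
          rw [pow_succ 2 (j + 1)] at h ⊢
          linarith

variable {x : ℝ}

lemma summable_betaMoment (hx : |x| < 1 / 2) (m : ℕ) :
    Summable fun j ↦ (-x) ^ j * betaMoment j m := by
  have hgeom : Summable fun j : ℕ ↦ (2 * |x|) ^ j * (2 * sqrtMajorant m) :=
    (summable_geometric_of_lt_one (by positivity) (by linarith)).mul_right _
  refine hgeom.of_norm_bounded fun j ↦ ?_
  rw [norm_mul, norm_pow, norm_neg, Real.norm_eq_abs, Real.norm_of_nonneg (betaMoment_nonneg j m)]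
  calc |x| ^ j * betaMoment j m ≤ |x| ^ j * (2 ^ (j + 1) * sqrtMajorant m) := by
        gcongr
        exact betaMoment_le j m
    _ = (2 * |x|) ^ j * (2 * sqrtMajorant m) := by ring

lemma mul_tsum_betaMoment_succ (hx : |x| < 1 / 2) (m : ℕ) :
    (m + 1 + x) * ∑' j, (-x) ^ j * betaMoment j (m + 1) =
      m * ∑' j, (-x) ^ j * betaMoment j m + (1 - m * betaMoment 0 m) := by
  have hm := (hasSum_nat_add_iff' 1).2 (summable_betaMoment hx m).hasSum
  have hsucc := (summable_betaMoment hx (m + 1)).hasSum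
  have hsucc' := (hasSum_nat_add_iff' 1).2 hsucc
  have h := (hsucc'.mul_left ((m : ℝ) + 1)).unique
    (((hm.mul_left (m : ℝ)).add (hsucc.mul_left (-x))).congr_fun fun j ↦ by
      linear_combination (-x) ^ (j + 1) * betaMoment_succ_succ j m)
  simp only [Finset.sum_range_one, pow_zero, one_mul, betaMoment_zero_succ] at h
  have hinv : ((m : ℝ) + 1) * (1 / (m + 1)) = 1 := by field_simp
  linarith

lemma hasSum_betaMoment (hx : |x| < 1 / 2) (m : ℕ) :
    HasSum (fun j ↦ (-x) ^ j * betaMoment j (m + 1))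
      (m.factorial / ∏ j ∈ Finset.range (m + 1), ((j : ℝ) + 1 + x)) := by
  have hpos (m : ℕ) : (0 : ℝ) < m + 1 + x := by
    linarith [m.cast_nonneg (α := ℝ), neg_abs_le x]
  convert! (summable_betaMoment hx (m + 1)).hasSum
  rw [div_eq_iff (Finset.prod_pos fun j _ ↦ hpos j).ne']
  induction m with
  | zero =>
    have h := mul_tsum_betaMoment_succ hx 0
    simp only [Nat.cast_zero, zero_mul, zero_add, sub_zero] at h
    simpa [mul_comm] using h.symm
  | succ m ih =>
    have h := mul_tsum_betaMoment_succ hx (m + 1)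
    have hinv : ((m + 1 : ℕ) : ℝ) * betaMoment 0 (m + 1) = 1 := by
      rw [betaMoment_zero_succ]
      push_cast
      field_simp
    rw [hinv, sub_self, add_zero] at h
    rw [Finset.prod_range_succ, Nat.factorial_succ, Nat.cast_mul, ih]
    linear_combination -(∏ j ∈ Finset.range (m + 1), ((j : ℝ) + 1 + x)) * h

end BetaMoments

section XiValues

variable {l : List ℕ}

lemma endpoint_one (a : ℕ) {r : ℕ} (f : Fin r → ℕ+) : endpoint 1 a f =
    if h : 0 < r then (f ⟨r - 1, Nat.sub_lt h Nat.one_pos⟩ : ℕ) else a := by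
  simp only [endpoint, PNat.natPred_add_one]

lemma LiL_eq_tsum (l : List ℕ) (z : ℝ) :
    LiL l z = ∑' f : {f : Fin l.length → ℕ+ // GapChain 1 0 f},
      (∏ i, (1 : ℝ) / ((f.1 i : ℕ) : ℝ) ^ l.get i) * z ^ endpoint 1 0 f.1 := by
  rw [LiL, ← (Equiv.subtypeEquivRight fun f : Fin l.length → ℕ+ ↦
    gapChain_one_iff_strictMono).tsum_eq]
  refine tsum_congr fun f ↦ ?_
  rw [endpoint_one, Finset.prod_div_distrib, Finset.prod_const_one, one_div_mul_eq_div]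
  rfl

lemma pow_div_exp_sub_one_mul_eq_betaKernel (j : ℕ) {m : ℕ} (hm : m ≠ 0) {t : ℝ} (ht : 0 < t) :
    t ^ j / (Real.exp t - 1) * (1 - Real.exp (-t)) ^ m = betaKernel j (m - 1) t := by
  have hexp : Real.exp t - 1 ≠ 0 := (sub_pos.2 (Real.one_lt_exp_iff.2 ht)).ne'
  have hfactor : 1 - Real.exp (-t) = Real.exp (-t) * (Real.exp t - 1) := by
    rw [mul_sub, ← Real.exp_add, neg_add_cancel, Real.exp_zero, mul_one]
  calc t ^ j / (Real.exp t - 1) * (1 - Real.exp (-t)) ^ m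
      = t ^ j / (Real.exp t - 1) * (1 - Real.exp (-t)) ^ (m - 1) * (1 - Real.exp (-t)) := by
        rw [mul_assoc, pow_sub_one_mul hm]
    _ = t ^ j / (Real.exp t - 1) * (1 - Real.exp (-t)) ^ (m - 1) *
          (Real.exp (-t) * (Real.exp t - 1)) := congrArg _ hfactor
    _ = betaKernel j (m - 1) t := by
        unfold betaKernel
        field_simp

lemma hasSum_nestedSum_betaMoment (hl : ∀ k ∈ l, 1 ≤ k) (j a : ℕ) :
    HasSum (fun f : {f : Fin l.length → ℕ+ // GapChain 1 a f} ↦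
      (∏ i, (1 : ℝ) / ((f.1 i : ℕ) : ℝ) ^ l.get i) * betaMoment j (endpoint 1 a f.1))
      (nestedSum 1 (betaMoment j) l a) :=
  hasSum_nestedSum (by positivity) (betaMoment_nonneg j) (betaMoment_le j)
    (fun k hk ↦ isMajorant_sqrtMajorant (hl k hk)) a

lemma integral_tsum_betaKernel (hl : ∀ k ∈ l, 1 ≤ k) (j a : ℕ) :
    ∫ t in Set.Ioi 0, ∑' f : {f : Fin l.length → ℕ+ // GapChain 1 a f},
      (∏ i, (1 : ℝ) / ((f.1 i : ℕ) : ℝ) ^ l.get i) * betaKernel j (endpoint 1 a f.1 - 1) t =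
      j.factorial * nestedSum 1 (betaMoment j) l a := by
  have hsum := (hasSum_nestedSum_betaMoment hl j a).mul_left (j.factorial : ℝ)
  have hterm (f : {f : Fin l.length → ℕ+ // GapChain 1 a f}) :
      ∫ t in Set.Ioi 0, (∏ i, (1 : ℝ) / ((f.1 i : ℕ) : ℝ) ^ l.get i) *
          betaKernel j (endpoint 1 a f.1 - 1) t =
        j.factorial * ((∏ i, (1 : ℝ) / ((f.1 i : ℕ) : ℝ) ^ l.get i) *
          betaMoment j (endpoint 1 a f.1)) := by
    rw [integral_const_mul, betaMoment]
    field_simp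
  refine HasSum.unique ?_ hsum
  simp_rw [← hterm] at hsum ⊢
  refine hasSum_integral_of_summable_integral_norm
    (fun f ↦ (integrableOn_betaKernel j _).const_mul _) (hsum.summable.congr fun f ↦ ?_)
  refine setIntegral_congr_fun measurableSet_Ioi fun t ht ↦ (Real.norm_of_nonneg ?_).symm
  exact mul_nonneg (by positivity) (betaKernel_nonneg j _ ht)

lemma xiL_eq_nestedSum (hne : l ≠ []) (hl : ∀ k ∈ l, 1 ≤ k) (j : ℕ) :
    xiL l (j + 1) = nestedSum 1 (betaMoment j) l 0 := by
  have hend (f : Fin l.length → ℕ+) : endpoint 1 0 f ≠ 0 := by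
    rw [endpoint_one, dif_pos (List.length_pos_iff.2 hne)]
    exact PNat.ne_zero _
  have hintegrand : Set.EqOn
      (fun t : ℝ ↦ t ^ ((j : ℝ) + 1 - 1) / (Real.exp t - 1) * LiL l (1 - Real.exp (-t)))
      (fun t ↦ ∑' f : {f : Fin l.length → ℕ+ // GapChain 1 0 f},
        (∏ i, (1 : ℝ) / ((f.1 i : ℕ) : ℝ) ^ l.get i) * betaKernel j (endpoint 1 0 f.1 - 1) t)
      (Set.Ioi 0) := fun t ht ↦ by
    simp only [add_sub_cancel_right, Real.rpow_natCast]
    rw [LiL_eq_tsum, ← tsum_mul_left]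
    refine tsum_congr fun f ↦ ?_
    rw [mul_left_comm, pow_div_exp_sub_one_mul_eq_betaKernel j (hend f.1) ht]
  rw [xiL, setIntegral_congr_fun measurableSet_Ioi hintegrand, integral_tsum_betaKernel hl,
    Real.Gamma_nat_eq_factorial, one_div_mul_eq_div, mul_div_cancel_left₀]
  exact Nat.cast_ne_zero.2 j.factorial_ne_zero

/-- The tail of the left side of `stmt6`: the terms of each `ξ` whose summation indices all
exceed `a`. -/
noncomputable def signedXiTail (r k a : ℕ) : ℝ :=
  ∑ f ∈ Finset.Nat.antidiagonalTuple (r + 1) k, (-1 : ℝ) ^ f (Fin.last r) *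
    nestedSum 1 (betaMoment (f (Fin.last r))) (List.ofFn fun i : Fin r ↦ f i.castSucc + 1) a

lemma signedXiTail_zero_left (k a : ℕ) : signedXiTail 0 k a = (-1) ^ k * betaMoment k a := by
  simp [signedXiTail, nestedSum]

lemma one_le_of_mem_ofFn_succ {r : ℕ} (f : Fin r → ℕ) :
    ∀ k ∈ List.ofFn fun i ↦ f i + 1, 1 ≤ k := by
  simp only [List.mem_ofFn, forall_exists_index, forall_apply_eq_imp_iff, Nat.le_add_left,
    implies_true]

lemma hasSum_signedXiTail_succ (r k a : ℕ) :
    HasSum (fun i ↦ ∑ p ∈ antidiagonal k,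
      signedXiTail r p.2 (a + i + 1) / (((a + i : ℕ) : ℝ) + 1) ^ (p.1 + 1))
      (signedXiTail (r + 1) k a) := by
  simp_rw [signedXiTail, sum_antidiagonalTuple_succ (r + 1), Finset.sum_div, mul_div_assoc]
  refine hasSum_sum fun p _ ↦ hasSum_sum fun f _ ↦ ?_
  rw [← Fin.succ_last, Fin.cons_succ, List.ofFn_succ]
  exact (summable_nestedSum (by positivity) (betaMoment_nonneg _) (betaMoment_le _)
    (isMajorant_sqrtMajorant (Nat.le_add_left _ _))
    (fun k hk ↦ isMajorant_sqrtMajorant (one_le_of_mem_ofFn_succ _ k hk)) a).hasSum.mul_left _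

lemma signedXiTail_eq_sum_xiL (r k : ℕ) :
    signedXiTail (r + 1) k 0 = ∑ f ∈ Finset.Nat.antidiagonalTuple (r + 1 + 1) k,
      (-1 : ℝ) ^ f (Fin.last (r + 1)) *
        xiL (List.ofFn fun i : Fin (r + 1) ↦ f i.castSucc + 1) (f (Fin.last (r + 1)) + 1) := by
  refine Finset.sum_congr rfl fun f _ ↦ ?_
  rw [xiL_eq_nestedSum (List.ofFn_eq_nil_iff.not.2 r.succ_ne_zero) (one_le_of_mem_ofFn_succ _)]

end XiValues

section GeneratingFunctions

lemma hasSum_pow_div_pow_succ {x M : ℝ} (hx : |x| < M) :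
    HasSum (fun q : ℕ ↦ x ^ q / M ^ (q + 1)) (1 / (M - x)) := by
  have hM : 0 < M := (abs_nonneg x).trans_lt hx
  have hsub : M - x ≠ 0 := (sub_pos.2 ((le_abs_self x).trans_lt hx)).ne'
  have hratio : |x / M| < 1 := by rwa [abs_div, abs_of_pos hM, div_lt_one hM]
  have hsum : 1 / (M - x) = (1 - x / M)⁻¹ / M := by field_simp
  rw [hsum]
  exact ((hasSum_geometric_of_abs_lt_one hratio).div_const M).congr_fun fun q ↦ by
    rw [div_pow, pow_succ, div_div]

lemma hasSum_pow_mul_sum_antidiagonal_div {c : ℕ → ℝ} {x M s : ℝ} (hx : |x| < M)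
    (hc : HasSum (fun k ↦ x ^ k * c k) s) :
    HasSum (fun k ↦ x ^ k * ∑ p ∈ antidiagonal k, c p.2 / M ^ (p.1 + 1)) (s / (M - x)) := by
  have hgeom := hasSum_pow_div_pow_succ hx
  have hprod := tsum_mul_tsum_eq_tsum_sum_antidiagonal_of_summable_norm hgeom.summable.norm
    hc.summable.norm
  have hsummable := (summable_norm_sum_mul_antidiagonal_of_summable_norm hgeom.summable.norm
    hc.summable.norm).of_norm
  rw [hgeom.tsum_eq, hc.tsum_eq, one_div_mul_eq_div] at hprod
  rw [hprod]
  refine hsummable.hasSum.congr_fun fun k ↦ ?_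
  rw [Finset.mul_sum]
  refine Finset.sum_congr rfl fun p hp ↦ ?_
  rw [← Finset.HasAntidiagonal.mem_antidiagonal.1 hp, pow_add]
  ring

lemma abs_sum_antidiagonal_div_le {c : ℕ → ℝ} {C M : ℝ} (hM : 1 ≤ M)
    (hc : ∀ k, |c k| ≤ 2 ^ k * C) (k : ℕ) :
    |∑ p ∈ antidiagonal k, c p.2 / M ^ (p.1 + 1)| ≤ 2 ^ k * (2 * C / M) := by
  have hM0 : 0 < M := zero_lt_one.trans_le hM
  have hterm (k : ℕ) : |c k / M| ≤ 2 ^ k * C / M := by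
    rw [abs_div, abs_of_pos hM0]
    exact div_le_div_of_nonneg_right (hc k) hM0.le
  have hC : 0 ≤ C := by simpa using (abs_nonneg _).trans (hc 0)
  induction k with
  | zero =>
    refine (by simpa using hterm 0 : _ ≤ C / M).trans ?_
    rw [pow_zero, one_mul]
    gcongr
    linarith
  | succ k ih =>
    have hrec : ∑ p ∈ antidiagonal (k + 1), c p.2 / M ^ (p.1 + 1) =
        c (k + 1) / M + (∑ p ∈ antidiagonal k, c p.2 / M ^ (p.1 + 1)) / M := by
      rw [Finset.Nat.sum_antidiagonal_succ, Finset.sum_div, zero_add, pow_one]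
      exact congrArg _ (Finset.sum_congr rfl fun p _ ↦ by rw [pow_succ, div_div])
    calc |∑ p ∈ antidiagonal (k + 1), c p.2 / M ^ (p.1 + 1)|
        ≤ |c (k + 1) / M| + |∑ p ∈ antidiagonal k, c p.2 / M ^ (p.1 + 1)| / M := by
          rw [hrec, ← abs_of_pos hM0, ← abs_div, abs_of_pos hM0]
          exact abs_add_le _ _
      _ ≤ 2 ^ (k + 1) * C / M + 2 ^ k * (2 * C / M) / 1 := by
          gcongr
          exact hterm (k + 1)
      _ = 2 ^ (k + 1) * (2 * C / M) := by ring

lemma abs_signedXiTail_le (r k a : ℕ) :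
    |signedXiTail r k a| ≤ 2 ^ k * (2 * 4 ^ r * sqrtMajorant a) := by
  induction r generalizing k a with
  | zero =>
    rw [signedXiTail_zero_left, abs_mul, abs_pow, abs_neg, abs_one, one_pow, one_mul,
      abs_of_nonneg (betaMoment_nonneg k a)]
    exact (betaMoment_le k a).trans_eq (by ring)
  | succ r ih =>
    obtain ⟨hsummable, hle⟩ := isMajorant_sqrtMajorant le_rfl a
    have hbound (i : ℕ) := abs_sum_antidiagonal_div_le (M := ((a + i : ℕ) : ℝ) + 1)
      (le_add_of_nonneg_left (Nat.cast_nonneg _)) (fun k ↦ ih k (a + i + 1)) k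
    rw [← (hasSum_signedXiTail_succ r k a).tsum_eq, ← Real.norm_eq_abs]
    calc ‖∑' i, ∑ p ∈ antidiagonal k,
          signedXiTail r p.2 (a + i + 1) / (((a + i : ℕ) : ℝ) + 1) ^ (p.1 + 1)‖
        ≤ 2 ^ k * (4 * 4 ^ r) *
            ∑' i, sqrtMajorant (a + i + 1) / (((a + i : ℕ) : ℝ) + 1) ^ 1 :=
          tsum_of_norm_bounded (hsummable.hasSum.mul_left (2 ^ k * (4 * 4 ^ r)))
            fun i ↦ (hbound i).trans_eq (by rw [pow_one]; ring)
      _ ≤ 2 ^ k * (4 * 4 ^ r) * (2 * sqrtMajorant a) := by gcongr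
      _ = 2 ^ k * (2 * 4 ^ (r + 1) * sqrtMajorant a) := by ring

/-- The common generating function of the two sides of `stmt6`, for `a = 0`. -/
noncomputable def connectedSum (x : ℝ) (r a : ℕ) : ℝ :=
  ∑' n : ℕ, connector x a n / ((n : ℝ) + 1 + x) ^ r

variable {x : ℝ}

lemma summable_connector_div_pow (hx0 : 0 ≤ x) (hx : 2 * x ^ 2 < 1) {r a : ℕ}
    (h : r ≠ 0 ∨ a ≠ 0) : Summable fun n : ℕ ↦ connector x a n / ((n : ℝ) + 1 + x) ^ r := by
  have hsq := (summable_tailStar_div le_rfl 0 0).mul_left (starGen x 0)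
  simp only [tailStar_zero, zero_add] at hsq
  rcases r with _ | r
  · obtain ⟨a, rfl⟩ := Nat.exists_eq_succ_of_ne_zero (h.resolve_left (absurd rfl))
    simpa using (hasSum_connector hx0 hx a).summable
  · refine hsq.of_nonneg_of_le
      (fun n ↦ div_nonneg (connector_nonneg hx a n) (by positivity)) fun n ↦ ?_
    have hstar : 0 ≤ starGen x 0 := zero_le_one.trans (one_le_starGen hx 0)
    have hpow : (n : ℝ) + 1 ≤ ((n : ℝ) + 1 + x) ^ (r + 1) :=
      (le_add_of_nonneg_right hx0).trans
        (le_self_pow₀ (by linarith [n.cast_nonneg (α := ℝ)]) r.succ_ne_zero)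
    calc connector x a n / ((n : ℝ) + 1 + x) ^ (r + 1)
        ≤ starGen x 0 / ((0 + 1) * (n + 1)) / (n + 1) := by
          refine div_le_div₀ (by positivity) ((connector_le hx0 hx a n).trans ?_)
            (by positivity) hpow
          gcongr
          exact a.cast_nonneg
      _ = starGen x 0 * (1 / ((n : ℝ) + 1) ^ 2) := by field_simp; ring

lemma hasSum_connectedSum_div (hx0 : 0 ≤ x) (hx : 2 * x ^ 2 < 1) (r a : ℕ) :
    HasSum (fun i : ℕ ↦ connectedSum x r (a + i + 1) / ((a + i : ℕ) + 1 - x))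
      (connectedSum x (r + 1) a) := by
  have hx1 := lt_one_of_two_mul_sq_lt_one hx
  let f : ℕ × ℕ → ℝ := fun p ↦
    connector x (a + p.2 + 1) p.1 / ((a + p.2 : ℕ) + 1 - x) / ((p.1 : ℝ) + 1 + x) ^ r
  have hf : 0 ≤ f := fun p ↦ by
    have hden : 0 ≤ ((a + p.2 : ℕ) : ℝ) + 1 - x := by
      linarith [(a + p.2).cast_nonneg (α := ℝ)]
    have := connector_nonneg hx (a + p.2 + 1) p.1
    exact div_nonneg (div_nonneg this hden) (by positivity)
  have hrow (n : ℕ) :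
      HasSum (fun i ↦ f (n, i)) (connector x a n / ((n : ℝ) + 1 + x) ^ (r + 1)) := by
    rw [pow_succ', ← div_div]
    exact (hasSum_connector_div hx0 hx a n).div_const _
  have htotal := (summable_connector_div_pow hx0 hx (.inl r.succ_ne_zero) (a := a)).hasSum
  refine hasSum_exchange ((summable_prod_of_nonneg hf).2 ⟨fun n ↦ (hrow n).summable, ?_⟩) hrow
    (fun i ↦ ?_) htotal
  · exact htotal.summable.congr fun n ↦ (hrow n).tsum_eq.symm
  · have hcol := summable_connector_div_pow hx0 hx (r := r) (.inr (a + i).succ_ne_zero)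
    exact (hcol.hasSum.div_const _).congr_fun fun n ↦ div_right_comm _ _ _

lemma two_mul_sq_lt_one (hx0 : 0 ≤ x) (hx : x < 1 / 2) : 2 * x ^ 2 < 1 := by nlinarith

lemma summable_pow_mul_signedXiTail (hx0 : 0 ≤ x) (hx : x < 1 / 2) (r a : ℕ) :
    Summable fun p : ℕ × ℕ ↦ x ^ p.2 * ∑ q ∈ antidiagonal p.2,
      signedXiTail r q.2 (a + p.1 + 1) / (((a + p.1 : ℕ) : ℝ) + 1) ^ (q.1 + 1) := by
  have hgeom : Summable fun k : ℕ ↦ (2 * x) ^ k :=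
    summable_geometric_of_lt_one (by positivity) (by linarith)
  have hmajorant := (isMajorant_sqrtMajorant le_rfl a).1.mul_left (4 * 4 ^ r)
  refine (hmajorant.mul_of_nonneg hgeom (fun i ↦ ?_)
    (fun k ↦ by positivity)).of_norm_bounded fun p ↦ ?_
  · have := sqrtMajorant_pos (a + i + 1)
    positivity
  · have hbound := abs_sum_antidiagonal_div_le (M := ((a + p.1 : ℕ) : ℝ) + 1)
      (le_add_of_nonneg_left (Nat.cast_nonneg _)) (fun k ↦ abs_signedXiTail_le r k (a + p.1 + 1))
      p.2
    rw [norm_mul, norm_pow, Real.norm_of_nonneg hx0]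
    exact (mul_le_mul_of_nonneg_left hbound (by positivity)).trans_eq (by ring)

lemma hasSum_pow_mul_signedXiTail (hx0 : 0 ≤ x) (hx : x < 1 / 2) {r a : ℕ} (h : r ≠ 0 ∨ a ≠ 0) :
    HasSum (fun k ↦ x ^ k * signedXiTail r k a) (connectedSum x r a) := by
  have hx2 := two_mul_sq_lt_one hx0 hx
  induction r generalizing a with
  | zero =>
    obtain ⟨m, rfl⟩ := Nat.exists_eq_succ_of_ne_zero (h.resolve_left (absurd rfl))
    have hsum := (hasSum_connector hx0 hx2 m).tsum_eq ▸
      hasSum_betaMoment (by rwa [abs_of_nonneg hx0]) m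
    simpa [connectedSum, signedXiTail_zero_left, neg_pow x, mul_left_comm, mul_assoc] using hsum
  | succ r ih =>
    have hrow (i : ℕ) := hasSum_pow_mul_sum_antidiagonal_div (x := x)
      (M := ((a + i : ℕ) : ℝ) + 1) (by
        rw [abs_of_nonneg hx0]
        linarith [(a + i).cast_nonneg (α := ℝ)])
      (ih (.inr (a + i).succ_ne_zero))
    exact hasSum_exchange (summable_pow_mul_signedXiTail hx0 hx r a) hrow
      (fun k ↦ (hasSum_signedXiTail_succ r k a).mul_left (x ^ k))
      (hasSum_connectedSum_div hx0 hx2 r a)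

lemma hasSum_choose_mul_pow_div_pow {M : ℝ} (hx : |x| < M) (r : ℕ) :
    HasSum (fun a : ℕ ↦ (-x) ^ a * ((a + r).choose r : ℝ) / M ^ (a + r + 1))
      (1 / (M + x) ^ (r + 1)) := by
  have hM : 0 < M := (abs_nonneg x).trans_lt hx
  have hratio : ‖-x / M‖ < 1 := by
    rwa [norm_div, norm_neg, Real.norm_eq_abs, Real.norm_of_nonneg hM.le, div_lt_one hM]
  have hsum : 1 / (M + x) ^ (r + 1) = 1 / (1 - -x / M) ^ (r + 1) / M ^ (r + 1) := by
    rw [neg_div, sub_neg_eq_add, div_div, ← mul_pow, add_mul, one_mul, div_mul_cancel₀ x hM.ne']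
  rw [hsum]
  refine ((hasSum_choose_mul_geometric_of_norm_lt_one r hratio).div_const _).congr_fun fun a ↦ ?_
  rw [div_pow, add_assoc, pow_add M]
  field_simp

/-- The terms of `connectedSum x (r + 1) 0`, with index `n`, expanded in powers `(a, 2b)` of `x`. -/
noncomputable def starTerm (x : ℝ) (r : ℕ) (p : ℕ × ℕ × ℕ) : ℝ :=
  (-x) ^ p.2.1 * ((p.2.1 + r).choose r : ℝ) / ((p.1 : ℝ) + 1) ^ (p.2.1 + r + 1) *
    (x ^ (2 * p.2.2) * tailStar p.2.2 p.1 / ((p.1 : ℝ) + 1))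

lemma norm_starTerm_le (x : ℝ) (r n a b : ℕ) : ‖starTerm x r (n, a, b)‖ ≤
    1 / ((n : ℝ) + 1) ^ 2 * (((a + r).choose r : ℝ) * |x| ^ a * (2 * x ^ 2) ^ b) := by
  have htail := pow_mul_tailStar_nonneg x b n
  have hpow : (n : ℝ) + 1 ≤ ((n : ℝ) + 1) ^ (a + r + 1) :=
    le_self_pow₀ (by linarith [n.cast_nonneg (α := ℝ)]) (a + r).succ_ne_zero
  calc ‖starTerm x r (n, a, b)‖
      = |x| ^ a * ((a + r).choose r : ℝ) / ((n : ℝ) + 1) ^ (a + r + 1) *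
          (x ^ (2 * b) * tailStar b n / (n + 1)) := by
        have hsnd : 0 ≤ x ^ (2 * b) * tailStar b n / ((n : ℝ) + 1) := by positivity
        have hfst : 0 ≤ ((a + r).choose r : ℝ) / ((n : ℝ) + 1) ^ (a + r + 1) := by positivity
        rw [starTerm, norm_mul, Real.norm_of_nonneg hsnd, mul_div_assoc, norm_mul,
          Real.norm_of_nonneg hfst, norm_pow, norm_neg, Real.norm_eq_abs, ← mul_div_assoc (|x| ^ a)]
    _ ≤ |x| ^ a * ((a + r).choose r : ℝ) / (n + 1) * ((2 * x ^ 2) ^ b / (n + 1)) := by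
        gcongr
        exact pow_mul_tailStar_le x b n
    _ = _ := by field_simp

lemma summable_starTerm (hx1 : |x| < 1) (hx : 2 * x ^ 2 < 1) (r : ℕ) :
    Summable (starTerm x r) := by
  have hsq := summable_tailStar_div le_rfl 0 0
  simp only [tailStar_zero, zero_add] at hsq
  have hchoose : Summable fun a : ℕ ↦ ((a + r).choose r : ℝ) * |x| ^ a :=
    (hasSum_choose_mul_geometric_of_norm_lt_one r (by simpa using hx1)).summable
  have hgeom : Summable fun b : ℕ ↦ (2 * x ^ 2) ^ b :=
    summable_geometric_of_lt_one (by positivity) hx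
  refine (hsq.mul_of_nonneg (hchoose.mul_of_nonneg hgeom (fun a ↦ by positivity)
    fun b ↦ by positivity) (fun n ↦ by positivity) fun p ↦ ?_).of_norm_bounded
    fun p ↦ norm_starTerm_le x r p.1 p.2.1 p.2.2
  exact mul_nonneg (by positivity) (by positivity)

lemma hasSum_starTerm_row (hx1 : |x| < 1) (hx : 2 * x ^ 2 < 1) (r n : ℕ) :
    HasSum (fun p : ℕ × ℕ ↦ starTerm x r (n, p))
      (connector x 0 n / ((n : ℝ) + 1 + x) ^ (r + 1)) := by
  have hchoose := hasSum_choose_mul_pow_div_pow (M := (n : ℝ) + 1)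
    (hx1.trans_le (le_add_of_nonneg_left n.cast_nonneg)) r
  have hstar := (hasSum_starGen hx n).div_const ((n : ℝ) + 1)
  have hsummable := (summable_starTerm hx1 hx r).prod_factor n
  rw [connector_zero_left, ← one_div_mul_eq_div (((n : ℝ) + 1 + x) ^ (r + 1))]
  simp only [starTerm] at hsummable ⊢
  exact hchoose.mul hstar hsummable

lemma hasSum_starTerm_column (x : ℝ) (r : ℕ) (p : ℕ × ℕ) :
    HasSum (fun n ↦ starTerm x r (n, p)) (x ^ (p.1 + 2 * p.2) * ((-1) ^ p.1 *
      ((p.1 + r).choose r : ℝ) * zetaStarL ([p.1 + r + 2] ++ List.replicate p.2 2))) := by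
  have hs : 2 ≤ p.1 + r + 2 := Nat.le_add_left _ _
  have hzeta := (summable_tailStar_div hs p.2 0).hasSum
  simp only [zero_add] at hzeta
  rw [zetaStarL_eq_tsum hs, ← mul_assoc]
  refine (hzeta.mul_left _).congr_fun fun n ↦ ?_
  have hpow : ((n : ℝ) + 1) ^ (p.1 + r + 2) = ((n : ℝ) + 1) ^ (p.1 + r + 1) * (n + 1) :=
    pow_succ _ _
  rw [starTerm, neg_pow, pow_add x, hpow]
  field_simp

lemma hasSum_pow_mul_zetaStarL (hx1 : |x| < 1) (hx : 2 * x ^ 2 < 1) (r : ℕ) :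
    HasSum (fun k ↦ x ^ k * ∑ p ∈ (Finset.range (k + 1) ×ˢ Finset.range (k + 1)).filter
        (fun p ↦ p.1 + 2 * p.2 = k), (-1 : ℝ) ^ p.1 * ((p.1 + r).choose r : ℝ) *
          zetaStarL ([p.1 + r + 2] ++ List.replicate p.2 2))
      (connectedSum x (r + 1) 0) := by
  have hsummable := summable_starTerm hx1 hx r
  have hrow (n : ℕ) := hasSum_starTerm_row hx1 hx r n
  have htotal : HasSum (fun n : ℕ ↦ connector x 0 n / ((n : ℝ) + 1 + x) ^ (r + 1))
      (connectedSum x (r + 1) 0) := (hsummable.hasSum.prod_fiberwise hrow).summable.hasSum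
  have hpairs := hasSum_exchange hsummable hrow (hasSum_starTerm_column x r) htotal
  refine (hasSum_sum_fiber hpairs (fun p ↦ p.1 + 2 * p.2) (fun k ↦
    (Finset.range (k + 1) ×ˢ Finset.range (k + 1)).filter fun p ↦ p.1 + 2 * p.2 = k)
    fun p k ↦ ?_).congr_fun fun k ↦ ?_
  · simp only [Finset.mem_filter, Finset.mem_product, Finset.mem_range]
    omega
  · rw [Finset.mul_sum]
    exact Finset.sum_congr rfl fun p hp ↦ by rw [(Finset.mem_filter.1 hp).2]

end GeneratingFunctions

end ArakawaKaneko

theorem stmt6 (r k : ℕ) (hr : 1 ≤ r) :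
    ∑ f ∈ Finset.Nat.antidiagonalTuple (r + 1) k,
        (-1 : ℝ) ^ (f (Fin.last r)) *
          xiL (List.ofFn fun i : Fin r => f i.castSucc + 1) ((f (Fin.last r) : ℝ) + 1) =
      ∑ p ∈ (Finset.range (k + 1) ×ˢ Finset.range (k + 1)).filter
          (fun p => p.1 + 2 * p.2 = k),
        (-1 : ℝ) ^ p.1 * (Nat.choose (p.1 + r - 1) (r - 1) : ℝ) *
          zetaStarL ([p.1 + r + 1] ++ List.replicate p.2 2) := by
  obtain ⟨r, rfl⟩ := Nat.exists_eq_succ_of_ne_zero (Nat.one_le_iff_ne_zero.1 hr)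
  have hsmall : ∀ᶠ x : ℝ in 𝓝[>] 0, x ∈ Set.Ioo 0 (1 / 2) := Ioo_mem_nhdsGT (by norm_num)
  have hgen : ∀ᶠ x : ℝ in 𝓝[>] 0,
      HasSum (fun k ↦ x ^ k * ArakawaKaneko.signedXiTail (r + 1) k 0)
        (ArakawaKaneko.connectedSum x (r + 1) 0) ∧ HasSum (fun k ↦ x ^ k *
          ∑ p ∈ (Finset.range (k + 1) ×ˢ Finset.range (k + 1)).filter (fun p ↦ p.1 + 2 * p.2 = k),
            (-1 : ℝ) ^ p.1 * (Nat.choose (p.1 + r) r : ℝ) *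
              zetaStarL ([p.1 + r + 2] ++ List.replicate p.2 2))
        (ArakawaKaneko.connectedSum x (r + 1) 0) := by
    filter_upwards [hsmall] with x ⟨hx0, hx⟩
    exact ⟨ArakawaKaneko.hasSum_pow_mul_signedXiTail hx0.le hx (.inl r.succ_ne_zero),
      ArakawaKaneko.hasSum_pow_mul_zetaStarL (by rw [abs_of_pos hx0]; linarith)
        (ArakawaKaneko.two_mul_sq_lt_one hx0.le hx) r⟩
  have hcoeff := congrFun (ArakawaKaneko.eq_of_frequently_hasSum_pow
    (hgen.frequently.filter_mono (nhdsGT_le_nhdsNE 0))) k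
  rw [Nat.succ_eq_add_one, ← ArakawaKaneko.signedXiTail_eq_sum_xiL]
  exact hcoeff
end

section
/- For real $x$ with $|x| < 1/2$, $\sum_{l=1}^{\infty} \frac{\Gamma(l-x)\Gamma(l+x)}{\Gamma(l)^2} \cdot \frac{1}{l^2} = \sum_{n=0}^{\infty} \left(\sum_{a+2b=n} [a=0]\, \zeta^{\star}(2, \{2\}^b)\right) x^n$; more precisely, $\sum_{l=1}^{\infty} \frac{1}{l^2}\prod_{k\geq l}\left(1-\frac{x^2}{k^2}\right)^{-1} = \sum_{b=0}^{\infty} \zeta^{\star}(\{2\}^{b+1})\, x^{2b}$. -/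
open scoped BigOperators
open MeasureTheory

open Filter Topology Finset
open scoped ENNReal

/-!
Write `h n a` for the complete homogeneous symmetric function of degree `n` in the variables
`a 0, a 1, …`, so that `ζ⋆({2}ⁿ)` is `h n` of the inverse squares. Multiplying by the geometric
series of `a 0` adds the variable `a 0`, so `∑ n, h n a` is `∏ k < N, (1 - a k)⁻¹` times the same
series for the variables `a N, a (N + 1), …`. The latter tends to `1` because `h n a ≤ (∑ a) ^ n`,
whence `∑ n, h n a = ∏ k, (1 - a k)⁻¹`. For `a k = x ^ 2 / (l + k) ^ 2` Euler's limit formula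
evaluates this product as `Γ(l - x) Γ(l + x) / Γ(l) ^ 2`. Finally, grouping the terms of
`ζ⋆({2}ᵇ⁺¹)` by their smallest index `l` and summing over `b` gives the theorem.
-/

section CompleteHomogeneous

lemma tsum_sum_antidiagonal_mul {A : Type*} [AddMonoid A] [HasAntidiagonal A]
    (f g : A → ℝ≥0∞) :
    ∑' n, ∑ p ∈ antidiagonal n, f p.1 * g p.2 = (∑' n, f n) * ∑' n, g n := by
  calc ∑' n, ∑ p ∈ antidiagonal n, f p.1 * g p.2
      = ∑' p : A × A, f p.1 * g p.2 := by
        rw [← HasAntidiagonal.sigmaAntidiagonalEquivProd.tsum_eq, ENNReal.tsum_sigma']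
        refine tsum_congr fun n => ?_
        rw [tsum_fintype, ← sum_coe_sort (antidiagonal n)]
        rfl
    _ = (∑' n, f n) * ∑' n, g n := by
        rw [ENNReal.tsum_prod']
        simp only [ENNReal.tsum_mul_left, ENNReal.tsum_mul_right]

/-- The complete homogeneous symmetric function of degree `n` in infinitely many variables
`a 0, a 1, …`: the sum of `a (f 0) * ⋯ * a (f (n - 1))` over all weakly increasing `f`. Taking
values in `ℝ≥0∞` makes every rearrangement below unconditional. -/
noncomputable def completeHomogeneous (a : ℕ → ℝ≥0∞) (n : ℕ) : ℝ≥0∞ :=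
  ∑' f : {f : Fin n → ℕ // Monotone f}, ∏ i, a (f.1 i)

/-- A weakly increasing tuple of length `n + 1` is encoded by its first entry `m` together with the
weakly increasing tuple of the excesses over `m` of the remaining entries. -/
def monotoneConsEquiv (n : ℕ) :
    ℕ × {g : Fin n → ℕ // Monotone g} ≃ {f : Fin (n + 1) → ℕ // Monotone f} where
  toFun p := ⟨Fin.cons p.1 fun i => p.2.1 i + p.1, by
    intro i j hij
    cases i using Fin.cases with
    | zero => cases j using Fin.cases <;> simp
    | succ i =>
      cases j using Fin.cases with
      | zero => simp at hij
      | succ j => simpa using p.2.2 (Fin.succ_le_succ_iff.mp hij)⟩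
  invFun f := ⟨f.1 0, fun i => f.1 i.succ - f.1 0, fun _ _ hij =>
    Nat.sub_le_sub_right (f.2 (Fin.succ_le_succ_iff.mpr hij)) _⟩
  left_inv p := by simp
  right_inv f := by
    ext i
    cases i using Fin.cases with
    | zero => rfl
    | succ i => simpa using Nat.sub_add_cancel (f.2 (Fin.zero_le i.succ))

variable (a : ℕ → ℝ≥0∞) (n : ℕ)

lemma completeHomogeneous_zero : completeHomogeneous a 0 = 1 := by
  have : Unique {f : Fin 0 → ℕ // Monotone f} :=
    ⟨⟨⟨Fin.elim0, fun i => i.elim0⟩⟩, fun _ => Subsingleton.elim _ _⟩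
  simp [completeHomogeneous]

lemma completeHomogeneous_succ :
    completeHomogeneous a (n + 1) =
      ∑' m, a m * completeHomogeneous (fun k => a (k + m)) n := by
  rw [completeHomogeneous, ← (monotoneConsEquiv n).tsum_eq, ENNReal.tsum_prod']
  simp only [completeHomogeneous, monotoneConsEquiv, Equiv.coe_fn_mk, Fin.prod_univ_succ,
    Fin.cons_zero, Fin.cons_succ, ENNReal.tsum_mul_left]

lemma completeHomogeneous_succ_eq_add :
    completeHomogeneous a (n + 1) =
      a 0 * completeHomogeneous a n + completeHomogeneous (fun k => a (k + 1)) (n + 1) := by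
  simp only [completeHomogeneous_succ _ n, add_assoc]
  rw [tsum_eq_zero_add' ENNReal.summable]
  simp only [add_zero]

lemma completeHomogeneous_eq_sum_antidiagonal :
    completeHomogeneous a n =
      ∑ p ∈ antidiagonal n, a 0 ^ p.1 * completeHomogeneous (fun k => a (k + 1)) p.2 := by
  induction n with
  | zero => simp [completeHomogeneous_zero]
  | succ n ih =>
    rw [completeHomogeneous_succ_eq_add, ih, Nat.sum_antidiagonal_succ, mul_sum, add_comm]
    simp only [pow_zero, one_mul, pow_succ', mul_assoc]

lemma completeHomogeneous_const_mul (c : ℝ≥0∞) :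
    completeHomogeneous (fun k => c * a k) n = c ^ n * completeHomogeneous a n := by
  simp only [completeHomogeneous, prod_mul_distrib, prod_const, card_univ, Fintype.card_fin,
    ENNReal.tsum_mul_left]

lemma tsum_completeHomogeneous_succ_mul_pow (c : ℝ≥0∞) :
    ∑' n, completeHomogeneous a (n + 1) * c ^ n =
      ∑' m, a m * ∑' n, completeHomogeneous (fun k => c * a (k + m)) n := by
  simp only [completeHomogeneous_succ, completeHomogeneous_const_mul, ← ENNReal.tsum_mul_left,
    ← ENNReal.tsum_mul_right]
  rw [ENNReal.tsum_comm]
  exact tsum_congr fun m => tsum_congr fun n => by ring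

lemma completeHomogeneous_le_tsum_pow : completeHomogeneous a n ≤ (∑' k, a k) ^ n := by
  induction n generalizing a with
  | zero => simp [completeHomogeneous_zero]
  | succ n ih =>
    calc completeHomogeneous a (n + 1)
        = ∑' m, a m * completeHomogeneous (fun k => a (k + m)) n := completeHomogeneous_succ a n
      _ ≤ ∑' m, a m * (∑' k, a k) ^ n := by
        gcongr with m
        refine (ih _).trans (pow_le_pow_left' ?_ n)
        exact ENNReal.tsum_comp_le_tsum_of_injective (add_left_injective m) a
      _ = (∑' k, a k) ^ (n + 1) := by rw [ENNReal.tsum_mul_right, pow_succ']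

lemma tsum_completeHomogeneous_eq_inv_mul :
    ∑' n, completeHomogeneous a n =
      (1 - a 0)⁻¹ * ∑' n, completeHomogeneous (fun k => a (k + 1)) n := by
  rw [← ENNReal.tsum_geometric, ← tsum_sum_antidiagonal_mul]
  exact tsum_congr (completeHomogeneous_eq_sum_antidiagonal a)

lemma tsum_completeHomogeneous_eq_prod_mul (N : ℕ) :
    ∑' n, completeHomogeneous a n =
      (∏ k ∈ range N, (1 - a k)⁻¹) * ∑' n, completeHomogeneous (fun k => a (k + N)) n := by
  induction N with
  | zero => simp
  | succ N ih =>
    rw [ih, tsum_completeHomogeneous_eq_inv_mul, prod_range_succ, mul_assoc]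
    simp only [zero_add, add_assoc, add_comm 1]

lemma one_le_tsum_completeHomogeneous : 1 ≤ ∑' n, completeHomogeneous a n :=
  (completeHomogeneous_zero a).ge.trans (ENNReal.le_tsum 0)

lemma tsum_completeHomogeneous_le : ∑' n, completeHomogeneous a n ≤ (1 - ∑' k, a k)⁻¹ := by
  rw [← ENNReal.tsum_geometric]
  exact ENNReal.tsum_le_tsum (completeHomogeneous_le_tsum_pow a)

variable {a}

lemma tendsto_tsum_completeHomogeneous_nat_add (ha : ∑' k, a k ≠ ∞) :
    Tendsto (fun N => ∑' n, completeHomogeneous (fun k => a (k + N)) n) atTop (𝓝 1) := by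
  have tail : Tendsto (fun N => (1 - ∑' k, a (k + N))⁻¹) atTop (𝓝 1) := by
    simpa using (ENNReal.Tendsto.sub tendsto_const_nhds (ENNReal.tendsto_sum_nat_add a ha)
      (.inl ENNReal.one_ne_top)).inv
  exact tendsto_of_tendsto_of_tendsto_of_le_of_le tendsto_const_nhds tail
    (fun _ => one_le_tsum_completeHomogeneous _) (fun _ => tsum_completeHomogeneous_le _)

theorem tendsto_prod_inv_one_sub (ha : ∑' k, a k ≠ ∞) :
    Tendsto (fun N => ∏ k ∈ range N, (1 - a k)⁻¹) atTop
      (𝓝 (∑' n, completeHomogeneous a n)) := by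
  have quotient : Tendsto (fun N => (∑' n, completeHomogeneous a n) /
      ∑' n, completeHomogeneous (fun k => a (k + N)) n) atTop
      (𝓝 (∑' n, completeHomogeneous a n)) := by
    simpa using ENNReal.Tendsto.const_div (tendsto_tsum_completeHomogeneous_nat_add ha)
      (.inl ENNReal.one_ne_top)
  refine quotient.congr' ?_
  filter_upwards [(tendsto_tsum_completeHomogeneous_nat_add ha).eventually_ne
    ENNReal.one_ne_top] with N hN
  rw [tsum_completeHomogeneous_eq_prod_mul a N, ENNReal.mul_div_cancel_right
    (one_pos.trans_le (one_le_tsum_completeHomogeneous _)).ne' hN]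

end CompleteHomogeneous

section GammaProduct

variable {s x : ℝ}

lemma GammaSeq_sq_div_mul (hs : 0 < s) (x : ℝ) {n : ℕ} (hn : n ≠ 0) :
    Real.GammaSeq s n ^ 2 / (Real.GammaSeq (s - x) n * Real.GammaSeq (s + x) n) =
      ∏ j ∈ range (n + 1), (1 - x ^ 2 / (s + j) ^ 2) := by
  have hpow : (n : ℝ) ^ (s - x) * (n : ℝ) ^ (s + x) = ((n : ℝ) ^ s) ^ 2 := by
    rw [← Real.rpow_add (by positivity), ← Real.rpow_mul_natCast (by positivity)]
    ring_nf
  have hfactor (j : ℕ) :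
      1 - x ^ 2 / (s + j) ^ 2 = (s - x + j) * (s + x + j) / (s + j) ^ 2 := by
    field_simp
    ring
  have hnum : (n : ℝ) ^ (s - x) * n.factorial * ((n : ℝ) ^ (s + x) * n.factorial) =
      ((n : ℝ) ^ s * n.factorial) ^ 2 := by
    linear_combination (n.factorial : ℝ) ^ 2 * hpow
  simp only [hfactor, prod_div_distrib, prod_mul_distrib, prod_pow, Real.GammaSeq]
  rw [div_mul_div_comm, hnum, div_pow, div_div_div_cancel_left' _ _ (by positivity)]

lemma summable_div_add_nat_sq (s c : ℝ) : Summable fun k : ℕ => c / (s + k) ^ 2 := by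
  have := ((Real.summable_one_div_nat_add_rpow s 2).mpr one_lt_two).mul_left c
  simpa [div_eq_mul_inv, add_comm s] using this

lemma Gamma_sub_mul_Gamma_add_pos (hx : |x| < s) :
    0 < Real.Gamma (s - x) * Real.Gamma (s + x) := by
  obtain ⟨hx₁, hx₂⟩ := abs_lt.mp hx
  exact mul_pos (Real.Gamma_pos_of_pos (by linarith)) (Real.Gamma_pos_of_pos (by linarith))

theorem hasProd_inv_one_sub_sq_div_sq (hx : |x| < s) :
    HasProd (fun k : ℕ => (1 - x ^ 2 / (s + k) ^ 2)⁻¹)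
      (Real.Gamma (s - x) * Real.Gamma (s + x) / Real.Gamma s ^ 2) := by
  have hs : 0 < s := (abs_nonneg x).trans_lt hx
  have hΓs : Real.Gamma s ≠ 0 := (Real.Gamma_pos_of_pos hs).ne'
  have hΓ : Real.Gamma (s - x) * Real.Gamma (s + x) ≠ 0 :=
    (Gamma_sub_mul_Gamma_add_pos hx).ne'
  have hlim : Tendsto (fun n => ∏ k ∈ range n, (1 - x ^ 2 / (s + k) ^ 2)) atTop
      (𝓝 (Real.Gamma s ^ 2 / (Real.Gamma (s - x) * Real.Gamma (s + x)))) := by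
    rw [← tendsto_add_atTop_iff_nat 1]
    refine Tendsto.congr' ?_ (((Real.GammaSeq_tendsto_Gamma s).pow 2).div
      ((Real.GammaSeq_tendsto_Gamma (s - x)).mul (Real.GammaSeq_tendsto_Gamma (s + x))) hΓ)
    filter_upwards [eventually_ne_atTop 0] with n hn using GammaSeq_sq_div_mul hs x hn
  have hmul : Multipliable fun k : ℕ => 1 - x ^ 2 / (s + k) ^ 2 := by
    simpa only [sub_eq_add_neg] using
      Real.multipliable_one_add_of_summable (summable_div_add_nat_sq s (x ^ 2)).neg
  simpa only [inv_div] using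
    (hmul.hasProd_iff_tendsto_nat.mpr hlim).inv₀ (div_ne_zero (pow_ne_zero 2 hΓs) hΓ)

lemma tprod_nat_ge_inv_one_sub_sq_div_sq {l : ℕ} (hx : |x| < l) :
    ∏' k : {k : ℕ // l ≤ k}, (1 - x ^ 2 / ((k : ℕ) : ℝ) ^ 2)⁻¹ =
      Real.Gamma (l - x) * Real.Gamma (l + x) / Real.Gamma l ^ 2 := by
  let e : ℕ ≃ {k : ℕ // l ≤ k} :=
    (notMemRangeEquiv l).symm.trans (Equiv.subtypeEquivRight (by simp))
  rw [← e.tprod_eq, ← (hasProd_inv_one_sub_sq_div_sq hx).tprod_eq]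
  exact tprod_congr fun k => by simp [e, add_comm]

end GammaProduct

section ZetaStar

variable {x : ℝ}

lemma tsum_completeHomogeneous_sq_div_add_nat_sq {s : ℝ} (hx : |x| < s) :
    ∑' n, completeHomogeneous (fun k => ENNReal.ofReal (x ^ 2 / (s + k) ^ 2)) n =
      ENNReal.ofReal (Real.Gamma (s - x) * Real.Gamma (s + x) / Real.Gamma s ^ 2) := by
  have factor_pos (k : ℕ) : 0 < 1 - x ^ 2 / (s + k) ^ 2 := by
    have hxk : |x| < |s + k| := (hx.trans_le (by simp)).trans_le (le_abs_self (s + k))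
    rw [sub_pos, div_lt_one (sq_pos_of_ne_zero (abs_pos.mp ((abs_nonneg x).trans_lt hxk)))]
    exact sq_lt_sq.mpr hxk
  have hprod (N : ℕ) : ∏ k ∈ range N, (1 - ENNReal.ofReal (x ^ 2 / (s + k) ^ 2))⁻¹ =
      ENNReal.ofReal (∏ k ∈ range N, (1 - x ^ 2 / (s + k) ^ 2)⁻¹) := by
    rw [ENNReal.ofReal_prod_of_nonneg fun k _ => (inv_pos.mpr (factor_pos k)).le]
    refine prod_congr rfl fun k _ => ?_
    rw [ENNReal.ofReal_inv_of_pos (factor_pos k), ENNReal.ofReal_sub _ (by positivity),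
      ENNReal.ofReal_one]
  refine tendsto_nhds_unique
    (tendsto_prod_inv_one_sub (summable_div_add_nat_sq s (x ^ 2)).tsum_ofReal_ne_top) ?_
  simp only [hprod]
  exact ENNReal.tendsto_ofReal (hasProd_inv_one_sub_sq_div_sq hx).tendsto_prod_nat

lemma zetaStarL_eq_toReal_completeHomogeneous {k : List ℕ} {s : ℕ} (hk : ∀ i, k.get i = s) :
    zetaStarL k =
      (completeHomogeneous (fun m => ENNReal.ofReal (1 / (1 + (m : ℝ)) ^ s)) k.length).toReal := by
  let e : {f : Fin k.length → ℕ+ // Monotone f} ≃ {f : Fin k.length → ℕ // Monotone f} :=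
    (Equiv.arrowCongr (Equiv.refl _) Equiv.pnatEquivNat).subtypeEquiv fun f => by
      simp [Monotone]
  rw [completeHomogeneous, ← e.tsum_eq,
    ENNReal.tsum_toReal_eq fun _ => ENNReal.prod_ne_top fun _ _ => ENNReal.ofReal_ne_top]
  refine tsum_congr fun f => ?_
  rw [ENNReal.toReal_prod]
  refine prod_congr rfl fun i _ => ?_
  have he : (((f.1 i : ℕ+) : ℕ) : ℝ) = 1 + ((e f).1 i : ℝ) := by
    exact_mod_cast ((add_comm 1 _).trans (PNat.natPred_add_one (f.1 i))).symm
  rw [hk i, ENNReal.toReal_ofReal (by positivity), he]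

lemma zetaStarL_replicate (n s : ℕ) :
    zetaStarL (List.replicate n s) =
      (completeHomogeneous (fun m => ENNReal.ofReal (1 / (1 + (m : ℝ)) ^ s)) n).toReal := by
  rw [zetaStarL_eq_toReal_completeHomogeneous (s := s) (by simp), List.length_replicate]

theorem tsum_completeHomogeneous_one_div_sq_mul_pow (hx : |x| < 1) :
    ∑' b, completeHomogeneous (fun m => ENNReal.ofReal (1 / (1 + (m : ℝ)) ^ 2)) (b + 1) *
        ENNReal.ofReal (x ^ 2) ^ b =
      ∑' l : ℕ+, ENNReal.ofReal (1 / ((l : ℕ) : ℝ) ^ 2 *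
        (Real.Gamma ((l : ℕ) - x) * Real.Gamma ((l : ℕ) + x) / Real.Gamma (l : ℕ) ^ 2)) := by
  rw [tsum_completeHomogeneous_succ_mul_pow, tsum_pnat_eq_tsum_succ (f := fun l : ℕ =>
    ENNReal.ofReal (1 / (l : ℝ) ^ 2 *
      (Real.Gamma (l - x) * Real.Gamma (l + x) / Real.Gamma l ^ 2)))]
  refine tsum_congr fun m => ?_
  have hxm : |x| < (m + 1 : ℕ) := hx.trans_le (by simp)
  rw [ENNReal.ofReal_mul (by positivity), ← tsum_completeHomogeneous_sq_div_add_nat_sq hxm,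
    Nat.cast_succ, add_comm (m : ℝ) 1]
  congr 1
  refine tsum_congr fun n => congrArg (completeHomogeneous · n) (funext fun k => ?_)
  rw [← ENNReal.ofReal_mul (sq_nonneg x)]
  push_cast
  ring_nf

theorem tsum_zetaStarL_replicate_two_mul_pow (hx : |x| < 1) :
    ∑' b : ℕ, zetaStarL (List.replicate (b + 1) 2) * x ^ (2 * b) =
      ∑' l : ℕ+, 1 / ((l : ℕ) : ℝ) ^ 2 *
        (Real.Gamma ((l : ℕ) - x) * Real.Gamma ((l : ℕ) + x) / Real.Gamma (l : ℕ) ^ 2) := by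
  let a (m : ℕ) : ℝ≥0∞ := ENNReal.ofReal (1 / (1 + (m : ℝ)) ^ 2)
  have ha : ∑' m, a m ≠ ∞ := (summable_div_add_nat_sq 1 1).tsum_ofReal_ne_top
  have coeff_ne_top (b : ℕ) : completeHomogeneous a (b + 1) * ENNReal.ofReal (x ^ 2) ^ b ≠ ∞ :=
    ENNReal.mul_ne_top
      (ne_top_of_le_ne_top (ENNReal.pow_ne_top ha) (completeHomogeneous_le_tsum_pow a (b + 1)))
      (ENNReal.pow_ne_top ENNReal.ofReal_ne_top)
  have term_nonneg (l : ℕ+) : 0 ≤ 1 / ((l : ℕ) : ℝ) ^ 2 *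
      (Real.Gamma ((l : ℕ) - x) * Real.Gamma ((l : ℕ) + x) / Real.Gamma (l : ℕ) ^ 2) := by
    have := Gamma_sub_mul_Gamma_add_pos (hx.trans_le (Nat.one_le_cast.mpr l.pos))
    positivity
  calc ∑' b : ℕ, zetaStarL (List.replicate (b + 1) 2) * x ^ (2 * b)
      = ∑' b, (completeHomogeneous a (b + 1) * ENNReal.ofReal (x ^ 2) ^ b).toReal := by
        refine tsum_congr fun b => ?_
        rw [zetaStarL_replicate, pow_mul, ENNReal.toReal_mul, ENNReal.toReal_pow,
          ENNReal.toReal_ofReal (sq_nonneg x)]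
    _ = (∑' b, completeHomogeneous a (b + 1) * ENNReal.ofReal (x ^ 2) ^ b).toReal :=
        (ENNReal.tsum_toReal_eq coeff_ne_top).symm
    _ = _ := by
        rw [tsum_completeHomogeneous_one_div_sq_mul_pow hx,
          ENNReal.tsum_toReal_eq fun _ => ENNReal.ofReal_ne_top]
        exact tsum_congr fun l => ENNReal.toReal_ofReal (term_nonneg l)

end ZetaStar

theorem stmt7_general (x : ℝ) (hx : |x| < 1) :
    (∑' l : ℕ+, Real.Gamma ((l : ℕ) - x) * Real.Gamma ((l : ℕ) + x)
        / (Real.Gamma (l : ℕ)) ^ 2 * (1 / ((l : ℕ) : ℝ) ^ 2) =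
      ∑' b : ℕ, zetaStarL (List.replicate (b + 1) 2) * x ^ (2 * b)) ∧
    (∑' l : ℕ+, (1 / ((l : ℕ) : ℝ) ^ 2) *
        ∏' k : {k : ℕ // (l : ℕ) ≤ k}, (1 - x ^ 2 / ((k : ℕ) : ℝ) ^ 2)⁻¹ =
      ∑' b : ℕ, zetaStarL (List.replicate (b + 1) 2) * x ^ (2 * b)) := by
  rw [tsum_zetaStarL_replicate_two_mul_pow hx]
  refine ⟨tsum_congr fun l => mul_comm _ _, tsum_congr fun l => ?_⟩
  have hxl : |x| < (l : ℕ) := hx.trans_le (Nat.one_le_cast.mpr l.pos)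
  rw [tprod_nat_ge_inv_one_sub_sq_div_sq hxl]

theorem stmt7 (x : ℝ) (hx : |x| < 1 / 2) :
    (∑' l : ℕ+, Real.Gamma ((l : ℕ) - x) * Real.Gamma ((l : ℕ) + x)
        / (Real.Gamma (l : ℕ)) ^ 2 * (1 / ((l : ℕ) : ℝ) ^ 2) =
      ∑' b : ℕ, zetaStarL (List.replicate (b + 1) 2) * x ^ (2 * b)) ∧
    (∑' l : ℕ+, (1 / ((l : ℕ) : ℝ) ^ 2) *
        ∏' k : {k : ℕ // (l : ℕ) ≤ k}, (1 - x ^ 2 / ((k : ℕ) : ℝ) ^ 2)⁻¹ =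
      ∑' b : ℕ, zetaStarL (List.replicate (b + 1) 2) * x ^ (2 * b)) :=
  stmt7_general x (hx.trans one_half_lt_one)
end
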